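/- arXiv:1706.06578 — 2 statements merged into one kernel-verified Lean document; each statement's English description precedes it below -/
import Mathlib

section
/- Let r ≥ 4 and let p > 3 be prime, and let V be a quasi-Hermitian variety of PG(r,p^4) whose characteristic vector v^V belongs to C_p. If ℓ is a line of PG(r,p^4) with |ℓ ∩ V| ≥ p^4 - p^2 + 1, then |ℓ ∩ V| ≥ p^4 - p + 1. -/
/-!
Common framework: `ProjPoint F n` is the set of points of the projective space
PG(n-1, |F|) (so PG(r, q²) corresponds to `n = r + 1` and `Fintype.card F = q ^ 2`).
Projective subspaces of projective dimension `k` are the submodules of `Fin n → F`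
of `finrank` equal to `k + 1`; lines have finrank 2, planes finrank 3 and
hyperplanes finrank `n - 1 = r`.
-/

open Module Matrix

/-- The points of the projective space PG(n-1, |F|): one-dimensional subspaces
of `F^n`. -/
def ProjPoint (F : Type) [Field F] (n : ℕ) : Type :=
  {W : Submodule F (Fin n → F) // finrank F W = 1}

/-- The set of projective points lying in a given subspace `W`. -/
def pointsIn (F : Type) [Field F] (n : ℕ) (W : Submodule F (Fin n → F)) :
    Set (ProjPoint F n) :=
  {P | P.1 ≤ W}

/-- The number of points of `V` lying in the subspace `W`. -/
noncomputable def secant (F : Type) [Field F] (n : ℕ) (V : Set (ProjPoint F n))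
    (W : Submodule F (Fin n → F)) : ℕ :=
  (V ∩ pointsIn F n W).ncard

/-- The characteristic vector of a set of projective points, with values in `F_p`. -/
noncomputable def charVec (F : Type) [Field F] (p n : ℕ) (S : Set (ProjPoint F n)) :
    ProjPoint F n → ZMod p :=
  Set.indicator S 1

/-- `C_p`: the `F_p`-code spanned by the characteristic vectors of hyperplanes. -/
def hypCode (F : Type) [Field F] (p n : ℕ) :
    Submodule (ZMod p) (ProjPoint F n → ZMod p) :=
  Submodule.span (ZMod p)
    {v | ∃ H : Submodule F (Fin n → F), finrank F H = n - 1 ∧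
      v = charVec F p n (pointsIn F n H)}

/-- A quasi-Hermitian variety of PG(r, q²): it has the size of a non-singular
Hermitian variety and the same two intersection numbers with hyperplanes.
(All identities are stated multiplied through by `q² - 1`.) -/
def IsQuasiHermitian (F : Type) [Field F] (q r : ℕ)
    (V : Set (ProjPoint F (r + 1))) : Prop :=
  (V.ncard : ℤ) * ((q : ℤ) ^ 2 - 1)
      = ((q : ℤ) ^ (r + 1) + (-1) ^ r) * ((q : ℤ) ^ r - (-1) ^ r) ∧
  ∀ H : Submodule F (Fin (r + 1) → F), finrank F H = r →
    ((secant F (r + 1) V H : ℤ) * ((q : ℤ) ^ 2 - 1)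
        = ((q : ℤ) ^ r + (-1) ^ (r - 1)) * ((q : ℤ) ^ (r - 1) - (-1) ^ (r - 1)) ∨
     (secant F (r + 1) V H : ℤ) * ((q : ℤ) ^ 2 - 1)
        = ((q : ℤ) ^ 2 - 1)
          + (q : ℤ) ^ 2 * (((q : ℤ) ^ (r - 1) + (-1) ^ r) * ((q : ℤ) ^ (r - 2) - (-1) ^ r)))

/-- The zero set, in PG(n-1,|F|), of the Hermitian form `x ↦ xᵀ A x^(q)`. -/
def hermSet (F : Type) [Field F] (q n : ℕ) (A : Matrix (Fin n) (Fin n) F) :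
    Set (ProjPoint F n) :=
  {P | ∀ x ∈ P.1, ∑ i, ∑ j, x i * A i j * (x j) ^ q = 0}

/-- A non-singular Hermitian variety of PG(n-1, q²). -/
def IsNonsingHermitian (F : Type) [Field F] (q n : ℕ)
    (V : Set (ProjPoint F n)) : Prop :=
  ∃ A : Matrix (Fin n) (Fin n) F, IsUnit A.det ∧
    Aᵀ = A.map (fun a => a ^ q) ∧ V = hermSet F q n A

/-- A singular Hermitian variety of PG(n-1, q²) whose singular space (the radical
of the Hermitian form) has projective dimension `d`. -/
def IsSingularHermitian (F : Type) [Field F] (q n d : ℕ)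
    (S : Set (ProjPoint F n)) : Prop :=
  ∃ A : Matrix (Fin n) (Fin n) F,
    Aᵀ = A.map (fun a => a ^ q) ∧
    finrank F (LinearMap.ker (Matrix.toLin' Aᵀ)) = d + 1 ∧
    S = hermSet F q n A

/-- A `d`-singular quasi-Hermitian variety of PG(r, q²). -/
def IsSingularQuasiHermitian (F : Type) [Field F] (q r d : ℕ)
    (S : Set (ProjPoint F (r + 1))) : Prop :=
  ∃ S₀ : Set (ProjPoint F (r + 1)), IsSingularHermitian F q (r + 1) d S₀ ∧
    S.ncard = S₀.ncard ∧
    ∀ H : Submodule F (Fin (r + 1) → F), finrank F H = r →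
      ∃ H₀ : Submodule F (Fin (r + 1) → F), finrank F H₀ = r ∧
        secant F (r + 1) S H = secant F (r + 1) S₀ H₀

/-- `U` is a classical unital (Hermitian curve) of the plane `π` of PG(n-1, q²):
in some coordinatization `e` of `π`, it is the zero set of a non-degenerate
Hermitian form on `F³`. -/
def IsClassicalUnital (F : Type) [Field F] (q n : ℕ)
    (π : Submodule F (Fin n → F)) (U : Set (ProjPoint F n)) : Prop :=
  ∃ e : (Fin 3 → F) →ₗ[F] (Fin n → F), LinearMap.ker e = ⊥ ∧ LinearMap.range e = π ∧
    ∃ A : Matrix (Fin 3) (Fin 3) F, IsUnit A.det ∧ Aᵀ = A.map (fun a => a ^ q) ∧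
      U = {P | ∃ y : Fin 3 → F, y ≠ 0 ∧ P.1 = Submodule.span F {e y} ∧
        ∑ i, ∑ j, y i * A i j * (y j) ^ q = 0}

open Polynomial in
/-- multiplicity lemma -/
lemma qh_mult {F : Type} [Field F] (K : ℕ) (B : Matrix (Fin K) (Fin K) F[X]) (c : F) (d : ℕ)
    (hd : d ≤ K)
    (v : ℕ → Fin K → F) (h0 : ∀ i, ∀ k : Fin K, (k : ℕ) < i → v i k = 0)
    (h1 : ∀ i, ∀ k : Fin K, (k : ℕ) = i → v i k = 1)
    (hv : ∀ i < d, ∀ a, ∑ k, (B a k).eval c * v i k = 0) :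
    (X - C c) ^ d ∣ B.det := by
  classical
  let P : Matrix (Fin K) (Fin K) F := fun k i => if (i : ℕ) < d then v i k else if k = i then 1 else 0
  have hP : P.det = 1 := by
    rw [Matrix.det_of_isLowerTriangular]
    · apply Finset.prod_eq_one
      intro i _
      simp only [P]
      split_ifs
      · exact h1 _ _ rfl
      · rfl
    · intro i j hij
      have hij' : i < j := hij
      simp only [P]
      split_ifs with h h'
      · exact h0 _ _ hij'
      · exact absurd h' hij'.ne
      · rfl
  have hdvd : ∀ (a i : Fin K), (if (i : ℕ) < d then (X - C c) else 1) ∣ (B * P.map C) a i := by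
    intro a i
    split_ifs with h
    · rw [dvd_iff_isRoot, IsRoot, Matrix.mul_apply, eval_finsetSum]
      rw [← hv i h a]
      apply Finset.sum_congr rfl
      intro k _
      rw [eval_mul, Matrix.map_apply, eval_C]
      simp only [P, if_pos h]
    · exact one_dvd _
  choose Q hQ using hdvd
  have hmat : B * P.map C = (Matrix.of Q) * Matrix.diagonal (fun i : Fin K => if (i : ℕ) < d then (X - C c) else 1) := by
    ext1 a i
    rw [Matrix.mul_diagonal, hQ, mul_comm]
    rfl
  have hdet := congrArg Matrix.det hmat
  rw [Matrix.det_mul, Matrix.det_mul, Matrix.det_diagonal] at hdet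
  have : (P.map C).det = (1 : F[X]) := by
    have := (RingHom.map_det (C : F →+* F[X]) P).symm
    rw [hP] at this
    simpa using this
  rw [this, mul_one] at hdet
  rw [hdet]
  apply Dvd.dvd.mul_left
  rw [Finset.prod_ite]
  simp only [Finset.prod_const]
  have : (Finset.univ.filter (fun i : Fin K => (i : ℕ) < d)).card = d := by
    rw [Fin.card_filter_val_lt]; omega
  rw [this, one_pow, mul_one]

/-- row selection -/
lemma qh_rows {F : Type} [Field F] (t K : ℕ) (E : Matrix (Fin t) (Fin K) F)
    (h : ∀ v : Fin K → F, (∀ a, ∑ k, E a k * v k = 0) → v = 0) :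
    ∃ f : Fin K → Fin t, (E.submatrix f id).det ≠ 0 := by
  classical
  obtain ⟨κ, a, ha, hspan, hli⟩ := exists_linearIndependent' F (fun i => E i)
  have hrank : E.rank = K := by
    rw [Matrix.rank, LinearMap.finrank_range_of_inj]
    · simp
    · rw [← LinearMap.ker_eq_bot, LinearMap.ker_eq_bot']
      intro v hv
      apply h
      intro a
      have := congrFun hv a
      simpa [Matrix.mulVec, dotProduct] using this
  have : Finite κ := Finite.of_injective a ha
  have := Fintype.ofFinite κ
  have hc : Fintype.card κ = K := by
    rw [← finrank_span_eq_card hli, hspan]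
    exact (Matrix.rank_eq_finrank_span_row E).symm.trans hrank
  let e : Fin K ≃ κ := (Fintype.equivFinOfCardEq hc).symm
  refine ⟨a ∘ e, ?_⟩
  have hli2 : LinearIndependent F (fun i => (E.submatrix (a ∘ e) id) i) :=
    hli.comp e e.injective
  have := Matrix.linearIndependent_rows_iff_isUnit.1 hli2
  rw [Matrix.isUnit_iff_isUnit_det] at this
  exact this.ne_zero

open Polynomial in
/-- leading coefficient of a determinant -/
lemma qh_lead {F : Type} [Field F] (K n : ℕ) (G : Matrix (Fin K) (Fin K) F[X])
    (hG : ∀ a k, (G a k).natDegree ≤ n) :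
    G.det.natDegree ≤ K * n ∧ G.det.coeff (K * n) = (G.map (fun g => g.coeff n)).det := by
  constructor
  · rw [Matrix.det_apply]
    apply natDegree_sum_le_of_forall_le
    intro σ _
    apply (natDegree_smul_le _ _).trans
    apply (natDegree_prod_le _ _).trans
    apply (Finset.sum_le_sum (fun i _ => hG _ _)).trans
    simp
  · rw [Matrix.det_apply, Matrix.det_apply, finsetSum_coeff]
    apply Finset.sum_congr rfl
    intro σ _
    have := coeff_prod_of_natDegree_le Finset.univ (fun i => G (σ i) i) n (fun i _ => hG _ _)
    rw [Finset.card_univ, Fintype.card_fin] at this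
    rw [Units.smul_def, Units.smul_def, coeff_smul, this]
    rfl

open Polynomial in
lemma qh_coeff_pow {F : Type} [Field F] (p : ℕ) [Fact p.Prime] [CharP F p] (f : F[X]) (j : ℕ)
    (hj : ¬ p ∣ j) : (f ^ p).coeff j = 0 := by
  have hp := (Fact.out : p.Prime)
  rw [← map_frobenius_expand, coeff_map, coeff_expand hp.pos, if_neg hj, map_zero]

open Polynomial in
/-- coefficients of products where one factor only has exponents divisible by p -/
lemma qh_coeff_mul {F : Type} [Field F] (p K : ℕ) (hp : 0 < p) (P V : F[X])
    (hV : ∀ j, ¬ p ∣ j → V.coeff j = 0) (w : ℕ) (hw : w < p * K) :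
    (P * V).coeff w = ∑ k : Fin K, (if p * k ≤ w then P.coeff (w - p * k) else 0) * V.coeff (p * k) := by
  rw [mul_comm, coeff_mul, Finset.Nat.sum_antidiagonal_eq_sum_range_succ (fun i j => V.coeff i * P.coeff j)]
  rw [Fin.sum_univ_eq_sum_range (fun k => (if p * k ≤ w then P.coeff (w - p * k) else 0) * V.coeff (p * k)) K]
  symm
  rw [← Finset.sum_filter_of_ne (s := Finset.range K) (p := fun k => p * k ≤ w)]
  · refine Finset.sum_of_injOn (fun k => p * k) ?_ ?_ ?_ ?_
    · intro a _ b _ hab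
      exact Nat.eq_of_mul_eq_mul_left hp hab
    · intro a ha
      simp at ha ⊢
      omega
    · intro j hj hj'
      rw [hV, zero_mul]
      rintro ⟨k, rfl⟩
      apply hj'
      refine ⟨k, ?_, rfl⟩
      simp at hj ⊢
      refine ⟨?_, by omega⟩
      exact Nat.lt_of_mul_lt_mul_left (by omega : p * k < p * K)
    · intro k hk
      simp at hk
      simp [hk.2, mul_comm]
  · intro k _ hk
    by_contra hcon
    simp [hcon] at hk

open Polynomial in
lemma qh_prod_all {F : Type} [Field F] [Fintype F] :
    ∏ y : F, (1 - C y * X : F[X]) = 1 - X ^ (Fintype.card F - 1) := by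
  classical
  have hc : 1 < Fintype.card F := Fintype.one_lt_card
  rw [← sub_eq_zero]
  apply eq_zero_of_natDegree_lt_card_of_eval_eq_zero' _ Finset.univ
  · intro z _
    rw [eval_sub, eval_prod]
    by_cases hz : z = 0
    · subst hz
      simp
      omega
    · rw [Finset.prod_eq_zero (Finset.mem_univ z⁻¹)]
      · simp [FiniteField.pow_card_sub_one_eq_one z hz]
      · simp [hz]
  · rw [Finset.card_univ]
    have h2 : (1 - X ^ (Fintype.card F - 1) : F[X]).natDegree ≤ Fintype.card F - 1 := by
      compute_degree
    have h1 : (∏ y : F, (1 - C y * X : F[X])).natDegree ≤ Fintype.card F - 1 := by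
      rw [← Finset.mul_prod_erase Finset.univ _ (Finset.mem_univ 0)]
      simp only [map_zero, zero_mul, sub_zero, one_mul]
      apply (natDegree_prod_le _ _).trans
      apply (Finset.sum_le_card_nsmul _ _ 1 _).trans
      · simp [Finset.card_erase_of_mem]
      · intro y _
        compute_degree
    have := (natDegree_sub_le (∏ y : F, (1 - C y * X : F[X])) (1 - X ^ (Fintype.card F - 1)))
    have := max_le h1 h2
    omega

open Polynomial in
/-- local structure -/
lemma qh_local {F : Type} [Field F] [Fintype F] [DecidableEq F] (p : ℕ) [Fact p.Prime]
    (N : Multiset F) (A : Finset F) (κ : ZMod p)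
    (h : ∀ y, (N.count y : ZMod p) + κ = if y ∈ A then 1 else 0) :
    ∃ (W : F[X]) (k : ℕ), W.coeff 0 = 1 ∧
      (N.map (fun y => 1 - C y * X)).prod * (1 - X ^ (Fintype.card F - 1)) ^ k =
        (∏ y ∈ A, (1 - C y * X)) * W ^ p := by
  have hp := (Fact.out : p.Prime)
  have ha : ∀ y, ∃ a : ℕ, N.count y + κ.val = (if y ∈ A then 1 else 0) + p * a := by
    intro y
    have hy := h y
    have e1 : ((N.count y + κ.val : ℕ) : ZMod p) = ((if y ∈ A then 1 else 0 : ℕ) : ZMod p) := by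
      push_cast
      rw [ZMod.natCast_zmod_val, hy]
    rw [ZMod.natCast_eq_natCast_iff] at e1
    have hle : (if y ∈ A then 1 else 0) ≤ N.count y + κ.val := by
      split_ifs with hyA
      · by_contra hcon
        have h0 : N.count y + κ.val = 0 := by omega
        rw [h0, if_pos hyA] at e1
        have := (Nat.modEq_iff_dvd' (by omega)).1 e1
        exact hp.one_lt.ne' (Nat.dvd_one.1 this)
      · exact Nat.zero_le _
    obtain ⟨a, ha⟩ := (Nat.modEq_iff_dvd' hle).1 e1.symm
    exact ⟨a, by omega⟩
  choose a ha using ha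
  refine ⟨∏ y : F, (1 - C y * X) ^ a y, κ.val, ?_, ?_⟩
  · rw [coeff_zero_eq_eval_zero, eval_prod]
    simp
  · rw [Finset.prod_multiset_map_count, ← qh_prod_all]
    have e1 : ∏ m ∈ N.toFinset, (1 - C m * X : F[X]) ^ N.count m = ∏ m : F, (1 - C m * X : F[X]) ^ N.count m := by
      apply Finset.prod_subset (Finset.subset_univ _)
      intro y _ hy
      rw [Multiset.mem_toFinset] at hy
      simp [Multiset.count_eq_zero_of_notMem hy]
    have e2 : ∏ y ∈ A, (1 - C y * X : F[X]) = ∏ y : F, (1 - C y * X : F[X]) ^ (if y ∈ A then 1 else 0) := by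
      rw [← Finset.prod_subset (Finset.subset_univ A)]
      · apply Finset.prod_congr rfl
        intro y hy; simp [hy]
      · intro y _ hy; simp [hy]
    rw [e1, e2, ← Finset.prod_pow, ← Finset.prod_pow, ← Finset.prod_mul_distrib, ← Finset.prod_mul_distrib]
    apply Finset.prod_congr rfl
    intro y _
    rw [← pow_add, ha, pow_add, ← pow_mul, mul_comm p]
open Polynomial in
noncomputable def qhPhi {F : Type} [Field F] (M : Multiset (F × F)) : F[X][X] :=
  (M.map (fun z => 1 - C (C z.1 * X + C z.2) * X)).prod

open Polynomial in
lemma qh_lin_coeff_zero {R : Type} [CommRing R] (a : R) (P : R[X]) :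
    ((1 - C a * X) * P).coeff 0 = P.coeff 0 := by
  simp [mul_coeff_zero]

open Polynomial in
lemma qh_lin_coeff_succ {R : Type} [CommRing R] (a : R) (P : R[X]) (w : ℕ) :
    ((1 - C a * X) * P).coeff (w + 1) = P.coeff (w + 1) - a * P.coeff w := by
  rw [sub_mul, one_mul, coeff_sub, mul_assoc, coeff_C_mul, coeff_X_mul]

open Polynomial in
lemma qh_phi {F : Type} [Field F] (M : Multiset (F × F)) : ∀ w : ℕ,
    ((qhPhi M).coeff w).natDegree ≤ w ∧
    (∀ c, ((qhPhi M).coeff w).eval c =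
      ((M.map (fun z => z.1 * c + z.2)).map (fun y => (1 - C y * X : F[X]))).prod.coeff w) ∧
    ((qhPhi M).coeff w).coeff w = ((M.map Prod.fst).map (fun y => (1 - C y * X : F[X]))).prod.coeff w := by
  induction M using Multiset.induction with
  | empty =>
    intro w
    simp only [qhPhi, Multiset.map_zero, Multiset.prod_zero, coeff_one]
    by_cases hw : w = 0
    · subst hw; simp
    · simp [hw]
  | cons z M ih =>
    have hP : qhPhi (z ::ₘ M) = (1 - C (C z.1 * X + C z.2) * X) * qhPhi M := by
      simp [qhPhi]
    intro w
    rw [hP]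
    simp only [Multiset.map_cons, Multiset.prod_cons]
    cases w with
    | zero =>
      simp only [qh_lin_coeff_zero]
      exact ih 0
    | succ w =>
      simp only [qh_lin_coeff_succ]
      obtain ⟨d1, e1, l1⟩ := ih (w + 1)
      obtain ⟨d0, e0, l0⟩ := ih w
      have dl : (C z.1 * X + C z.2 : F[X]).natDegree ≤ 1 := by compute_degree
      have dm := natDegree_mul_le (p := (C z.1 * X + C z.2 : F[X])) (q := (qhPhi M).coeff w)
      refine ⟨?_, ?_, ?_⟩
      · refine (natDegree_sub_le _ _).trans (max_le d1 ?_)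
        omega
      · intro c
        rw [eval_sub, e1, eval_mul, e0]
        simp
      · rw [coeff_sub, l1, add_mul, coeff_add, mul_assoc, coeff_C_mul, coeff_X_mul, l0, coeff_C_mul,
          coeff_eq_zero_of_natDegree_lt (by omega : ((qhPhi M).coeff w).natDegree < w + 1)]
        simp

open Polynomial in
lemma qh_one_sub_pow {F : Type} [Field F] (L k : ℕ) : (X ^ L : F[X]) ∣ (1 - X ^ L) ^ k - 1 := by
  have := sub_dvd_pow_sub_pow (1 - X ^ L : F[X]) 1 k
  rw [one_pow] at this
  refine dvd_trans ?_ this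
  exact ⟨-1, by ring⟩

open Polynomial in
lemma qh_prod_coeff_zero {F : Type} [Field F] (N : Multiset F) :
    (N.map (fun y => (1 - C y * X : F[X]))).prod.coeff 0 = 1 := by
  induction N using Multiset.induction with
  | empty => simp
  | cons z M ih => rw [Multiset.map_cons, Multiset.prod_cons, qh_lin_coeff_zero, ih]

open Polynomial in
lemma qh_coprime {F : Type} [Field F] (W : F[X]) (h : W.coeff 0 = 1) (L : ℕ) : IsCoprime W (X ^ L) := by
  apply IsCoprime.pow_right
  refine ⟨1, -(W.divX), ?_⟩
  have := W.divX_mul_X_add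
  rw [h] at this
  nth_rewrite 1 [← this]
  simp

open Polynomial in
/-- kernel vectors at a finite line -/
lemma qh_ker {F : Type} [Field F] [Fintype F] [DecidableEq F] (p : ℕ) [Fact p.Prime] [CharP F p]
    (N : Multiset F) (A : Finset F) (κ : ZMod p)
    (h : ∀ y, (N.count y : ZMod p) + κ = if y ∈ A then 1 else 0)
    (n t K : ℕ) (hQ : n + t < Fintype.card F - 1) (hK : n + t < p * K) :
    ∃ v : ℕ → Fin K → F, (∀ i, ∀ k : Fin K, (k : ℕ) < i → v i k = 0) ∧
      (∀ i, ∀ k : Fin K, (k : ℕ) = i → v i k = 1) ∧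
      ∀ i, A.card + p * i ≤ n → ∀ w, n < w → w ≤ n + t →
        ∑ k : Fin K, (if p * k ≤ w then (N.map (fun y => (1 - C y * X : F[X]))).prod.coeff (w - p * k) else 0)
          * v i k = 0 := by
  have hp := (Fact.out : p.Prime)
  obtain ⟨W, k0, hW, hWe⟩ := qh_local p N A κ h
  set L := Fintype.card F - 1 with hL
  set Φ := (N.map (fun y => (1 - C y * X : F[X]))).prod with hΦ
  obtain ⟨U, Y, hUY⟩ := qh_coprime W hW L
  have hU0 : U.coeff 0 = 1 := by
    have := congrArg (fun f : F[X] => f.coeff 0) hUY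
    simp only [coeff_add, mul_coeff_zero, hW, coeff_one_zero, mul_one] at this
    rw [coeff_X_pow, if_neg (by omega)] at this
    simpa using this
  have hV : ∀ i j, ¬ p ∣ j → (U ^ p * X ^ (p * i)).coeff j = 0 := by
    intro i j hj
    rw [mul_comm p i, pow_mul, ← mul_pow]
    exact qh_coeff_pow p _ j hj
  refine ⟨fun i k => (U ^ p * X ^ (p * i)).coeff (p * k), ?_, ?_, ?_⟩
  · intro i k hk
    beta_reduce
    rw [coeff_mul_X_pow', if_neg]
    have := Nat.mul_lt_mul_of_pos_left hk hp.pos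
    omega
  · intro i k hk
    beta_reduce
    rw [coeff_mul_X_pow', if_pos (by rw [hk]), hk, Nat.sub_self, coeff_zero_eq_eval_zero, eval_pow,
      ← coeff_zero_eq_eval_zero, hU0, one_pow]
  · intro i hi w hw1 hw2
    rw [← qh_coeff_mul p K hp.pos Φ _ (hV i) w (by omega)]
    -- Φ * U^p ≡ ∏ A mod X^L
    have hdvd : (X ^ L : F[X]) ∣ Φ * U ^ p - ∏ y ∈ A, (1 - C y * X) := by
      have h1 : (X ^ L : F[X]) ∣ Φ * U ^ p * ((1 - X ^ L) ^ k0 - 1) := (qh_one_sub_pow L k0).mul_left _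
      have h2 : (X ^ L : F[X]) ∣ (W * U) ^ p - 1 := by
        have := sub_dvd_pow_sub_pow (W * U) 1 p
        rw [one_pow] at this
        refine dvd_trans ⟨-Y, ?_⟩ this
        linear_combination hUY
      have h3 := (h2.mul_left (∏ y ∈ A, (1 - C y * X))).sub h1
      have e : Φ * U ^ p - ∏ y ∈ A, (1 - C y * X) =
        (∏ y ∈ A, (1 - C y * X)) * ((W * U) ^ p - 1) - Φ * U ^ p * ((1 - X ^ L) ^ k0 - 1) := by
        rw [mul_pow]
        linear_combination (U ^ p) * hWe
      rw [e]; exact h3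
    have hdvd2 := hdvd.mul_right (X ^ (p * i))
    have hc := (X_pow_dvd_iff.1 hdvd2) w (by omega)
    rw [sub_mul, coeff_sub, mul_assoc, sub_eq_zero] at hc
    rw [hc]
    apply coeff_eq_zero_of_natDegree_lt
    refine lt_of_le_of_lt natDegree_mul_le ?_
    have h4 : (∏ y ∈ A, (1 - C y * X : F[X])).natDegree ≤ A.card := by
      refine (natDegree_prod_le _ _).trans ?_
      refine (Finset.sum_le_card_nsmul _ _ 1 ?_).trans (by simp)
      intro y _
      compute_degree
    rw [natDegree_X_pow]
    omega

open Polynomial in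
/-- injectivity at infinity -/
lemma qh_inf {F : Type} [Field F] [Fintype F] [DecidableEq F] (p : ℕ) [Fact p.Prime] [CharP F p]
    (N : Multiset F) (A : Finset F) (κ : ZMod p)
    (h : ∀ y, (N.count y : ZMod p) + κ = if y ∈ A then 0 else 1) (h0 : (0 : F) ∉ A)
    (n t K : ℕ) (ht : A.card = t) (hQ : n + t < Fintype.card F - 1) (hK : n + t + p = p * K)
    (hlt : n + t < p * t)
    (v : Fin K → F)
    (hv : ∀ w, n < w → w ≤ n + t →
        ∑ k : Fin K, (if p * k ≤ w then (N.map (fun y => (1 - C y * X : F[X]))).prod.coeff (w - p * k) else 0)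
          * v k = 0) : v = 0 := by
  have hp := (Fact.out : p.Prime)
  have hppos := hp.pos
  set L := Fintype.card F - 1 with hL
  set Φ := (N.map (fun y => (1 - C y * X : F[X]))).prod with hΦ
  set H : F[X] := ∏ y ∈ A, (1 - C y * X) with hH
  obtain ⟨W, k0, hW, hWe⟩ := qh_local p (N + A.val) ∅ (κ - 1) (by
    intro y
    have := h y
    rw [Multiset.count_add, Multiset.count_eq_of_nodup A.nodup]
    simp only [Finset.mem_val]
    by_cases hy : y ∈ A
    · rw [if_pos hy] at this
      simp only [if_pos hy, Finset.notMem_empty, if_false]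
      push_cast
      linear_combination this
    · rw [if_neg hy] at this
      simp only [if_neg hy, Finset.notMem_empty, if_false]
      push_cast
      linear_combination this)
  rw [Multiset.map_add, Multiset.prod_add, Finset.prod_empty, one_mul] at hWe
  change Φ * H * (1 - X ^ L) ^ k0 = W ^ p at hWe
  -- the polynomial V
  let V0 : F[X] := ∑ k : Fin K, C (v k) * X ^ (k : ℕ)
  have hV0 : ∀ k : Fin K, V0.coeff k = v k := by
    intro k
    simp only [V0, finsetSum_coeff, coeff_C_mul, coeff_X_pow]
    rw [Finset.sum_eq_single k]
    · simp
    · intro b _ hb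
      rw [if_neg (fun e => hb (Fin.ext e.symm))]; simp
    · simp
  let V : F[X] := expand F p V0
  have hVc : ∀ k : Fin K, V.coeff (p * k) = v k := by
    intro k
    rw [coeff_expand_mul' hppos, hV0]
  have hVn : ∀ j, ¬ p ∣ j → V.coeff j = 0 := by
    intro j hj
    rw [coeff_expand hppos, if_neg hj]
  have hVd : V.natDegree ≤ n + t := by
    rw [natDegree_expand]
    have : V0.natDegree ≤ K - 1 := by
      apply natDegree_sum_le_of_forall_le
      intro k _
      refine (natDegree_C_mul_X_pow_le _ _).trans ?_
      omega
    have h2 := Nat.mul_le_mul_right p this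
    rw [Nat.sub_mul, one_mul, mul_comm K p] at h2
    omega
  have hmid : ∀ w, n < w → w ≤ n + t → (Φ * V).coeff w = 0 := by
    intro w h1 h2
    rw [qh_coeff_mul p K hppos Φ V hVn w (by omega)]
    simp only [hVc]
    exact hv w h1 h2
  -- truncation
  let B : F[X] := ∑ j ∈ Finset.range (n + 1), C ((Φ * V).coeff j) * X ^ j
  have hBc : ∀ j, B.coeff j = if j ≤ n then (Φ * V).coeff j else 0 := by
    intro j
    simp only [B, finsetSum_coeff, coeff_C_mul, coeff_X_pow]
    simp
  have hBd : B.natDegree ≤ n := by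
    rw [natDegree_le_iff_coeff_eq_zero]
    intro j hj
    rw [hBc, if_neg (by omega)]
  have hdiff : (X ^ (n + t + 1) : F[X]) ∣ Φ * V - B := by
    rw [X_pow_dvd_iff]
    intro j hj
    rw [coeff_sub, hBc]
    split_ifs with hjn
    · simp
    · rw [hmid j (by omega) (by omega)]; simp
  have hHd : H.natDegree ≤ t := by
    refine (natDegree_prod_le _ _).trans ?_
    refine (Finset.sum_le_card_nsmul _ _ 1 ?_).trans (by simp [ht])
    intro y _
    compute_degree
  have hBHd : (B * H).natDegree ≤ n + t := natDegree_mul_le.trans (by omega)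
  have hcong : (X ^ (n + t + 1) : F[X]) ∣ W ^ p * V - B * H := by
    have h1 := hdiff.mul_right H
    have h2 : (X ^ (n + t + 1) : F[X]) ∣ (1 - X ^ L) ^ k0 - 1 :=
      (pow_dvd_pow X (by omega)).trans (qh_one_sub_pow L k0)
    have h3 := h2.mul_left (Φ * H * V)
    have e : W ^ p * V - B * H = (Φ * V - B) * H + (Φ * H * V) * ((1 - X ^ L) ^ k0 - 1) := by
      rw [← hWe]; ring
    rw [e]; exact h1.add h3
  have hWV : ∀ j, ¬ p ∣ j → (W ^ p * V).coeff j = 0 := by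
    intro j hj
    have : W ^ p * V = expand F p (map (frobenius F p) W * V0) := by
      rw [map_mul, ← map_frobenius_expand, map_expand]
    rw [this, coeff_expand hppos, if_neg hj]
  have hBHn : ∀ j, ¬ p ∣ j → (B * H).coeff j = 0 := by
    intro j hj
    by_cases hjn : j ≤ n + t
    · have := (X_pow_dvd_iff.1 hcong) j (by omega)
      rw [coeff_sub, hWV j hj, zero_sub, neg_eq_zero] at this
      exact this
    · exact coeff_eq_zero_of_natDegree_lt (by omega)
  have hexp : expand F p (contract p (B * H)) = B * H := by
    ext j
    rw [coeff_expand hppos]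
    split_ifs with hj
    · rw [coeff_contract hp.ne_zero, Nat.div_mul_cancel hj]
    · exact (hBHn j hj).symm
  have hR : contract p (B * H) = 0 := by
    apply eq_zero_of_natDegree_lt_card_of_eval_eq_zero' _ (A.image (fun m => (m⁻¹) ^ p))
    · intro z hz
      obtain ⟨m, hm, rfl⟩ := Finset.mem_image.1 hz
      rw [← expand_eval, hexp, eval_mul]
      have : eval m⁻¹ H = 0 := by
        rw [hH, eval_prod, Finset.prod_eq_zero hm]
        have : m ≠ 0 := fun e => h0 (e ▸ hm)
        simp [this]
      rw [this, mul_zero]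
    · rw [Finset.card_image_of_injective, ht]
      · have := congrArg natDegree hexp
        rw [natDegree_expand] at this
        have : (contract p (B * H)).natDegree * p < t * p := by
          rw [mul_comm t p]; omega
        exact Nat.lt_of_mul_lt_mul_right this
      · intro a b hab
        exact inv_injective (frobenius_inj F p hab)
  rw [hR, map_zero] at hexp
  have hHne : H ≠ 0 := by
    rw [hH, Finset.prod_ne_zero_iff]
    intro y _ hy
    have := congrArg (fun f : F[X] => f.coeff 0) hy
    simp at this
  have hB0 : B = 0 := by
    rcases mul_eq_zero.1 hexp.symm with h | h
    · exact h
    · exact absurd h hHne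
  rw [hB0, sub_zero] at hdiff
  have hcop := (qh_coprime Φ (qh_prod_coeff_zero N) (n + t + 1)).symm
  have hVdvd := hcop.dvd_of_dvd_mul_left hdiff
  have hV00 : V = 0 := by
    by_contra hne
    have := natDegree_le_of_dvd hVdvd hne
    rw [natDegree_X_pow] at this
    omega
  funext k
  rw [← hVc, hV00]; simp
set_option maxHeartbeats 4000000 in
open Polynomial in
/-- The algebraic core. -/
lemma qh_core {F : Type} [Field F] [Fintype F] [DecidableEq F] (p : ℕ) [Fact p.Prime] [CharP F p]
    (hp3 : 3 < p) (hF : Fintype.card F = p ^ 4)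
    (M : Multiset (F × F)) (S : F → Finset F) (κ : F → ZMod p)
    (hS : ∀ c y, ((M.map (fun z => z.1 * c + z.2)).count y : ZMod p) + κ c = if y ∈ S c then 1 else 0)
    (A : Finset F) (κ' : ZMod p)
    (hA : ∀ m, ((M.map Prod.fst).count m : ZMod p) + κ' = if m ∈ A then 0 else 1)
    (h0 : (0 : F) ∉ A) (hSp : ∀ c, p ∣ (S c).card) (hAp : p ∣ A.card)
    (hA1 : p < A.card) (hA2 : A.card ≤ p ^ 2)
    (hsum : ∑ c, (S c).card ≤ p ^ 6 + p ^ 4) : False := by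
  have hp := (Fact.out : p.Prime)
  have hppos := hp.pos
  obtain ⟨τ, hτ⟩ := hAp
  have hτ1 : 2 ≤ τ := by
    by_contra hcon
    have : p * τ ≤ p * 1 := Nat.mul_le_mul_left p (by omega)
    omega
  have hτ2 : τ ≤ p := by
    rw [hτ, pow_two] at hA2
    exact Nat.le_of_mul_le_mul_left hA2 hppos
  set n := p * p with hn
  set t := p * τ with ht
  set K := p + τ + 1 with hK
  have hnt : n + t + p = p * K := by rw [hn, ht, hK]; ring
  have htn : t ≤ n := Nat.mul_le_mul_left p hτ2
  have hp4 : p ^ 4 = n * n := by rw [hn]; ring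
  have hn25 : 16 ≤ n := by rw [hn]; nlinarith
  have hQ : n + t < Fintype.card F - 1 := by
    rw [hF, hp4]
    have : 16 * n ≤ n * n := Nat.mul_le_mul_right n hn25
    omega
  have hlt : n + t < p * t := by
    have h1 : p * t = p * (p * τ) := by rw [ht]
    rw [h1, hn, ht]
    have : p * p + p * τ < p * (p * τ) := by
      rw [← mul_add]
      apply Nat.mul_lt_mul_of_pos_left _ hppos
      nlinarith
    exact this
  have hinj := qh_inf p (M.map Prod.fst) A κ' hA h0 n t K hτ hQ hnt hlt
  let Einf : Matrix (Fin t) (Fin K) F := fun a k =>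
    if p * (k : ℕ) ≤ n + 1 + a then
      ((M.map Prod.fst).map (fun y => (1 - C y * X : F[X]))).prod.coeff (n + 1 + a - p * k) else 0
  obtain ⟨f, hf⟩ := qh_rows t K Einf (by
    intro v hv
    apply hinj v
    intro w hw1 hw2
    have := hv ⟨w - (n + 1), by omega⟩
    simp only [Einf] at this
    rw [show n + 1 + (w - (n + 1)) = w by omega] at this
    exact this)
  let B : Matrix (Fin K) (Fin K) F[X] := fun a k =>
    if p * (k : ℕ) ≤ n + 1 + (f a : ℕ) then (qhPhi M).coeff (n + 1 + (f a : ℕ) - p * k) else 0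
  -- divisibility
  have hdiv : ∀ c, (X - C c) ^ (p + 1 - (S c).card / p) ∣ B.det := by
    intro c
    obtain ⟨v, v0, v1, hv⟩ := qh_ker p (M.map (fun z => z.1 * c + z.2)) (S c) (κ c) (hS c) n t K hQ (by omega)
    apply qh_mult K B c _ ((Nat.sub_le _ _).trans (by omega)) v v0 v1
    intro i hi a
    obtain ⟨s, hs⟩ := hSp c
    rw [hs, Nat.mul_div_cancel_left s hppos] at hi
    rw [← hv i ?_ (n + 1 + (f a : ℕ)) (by omega) (by have := (f a).2; omega)]
    · apply Finset.sum_congr rfl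
      intro k _
      congr 1
      simp only [B]
      split_ifs
      · exact ((qh_phi M _).2.1 c)
      · simp
    · rw [hs, ← mul_add, hn]
      exact Nat.mul_le_mul_left p (by omega)
  have hprod : ∏ c : F, (X - C c) ^ (p + 1 - (S c).card / p) ∣ B.det := by
    apply Finset.prod_dvd_of_coprime
    · intro a _ b _ hab
      exact (pairwise_coprime_X_sub_C (s := (id : F → F)) Function.injective_id hab).pow
    · intro c _; exact hdiv c
  -- degree
  let r : Fin K → F[X] := fun a => X ^ (n + t - (n + 1 + (f a : ℕ)))
  let s : Fin K → F[X] := fun k => X ^ (p * (k : ℕ))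
  let G : Matrix (Fin K) (Fin K) F[X] := Matrix.diagonal r * B * Matrix.diagonal s
  have hGe : ∀ a k, G a k = X ^ (n + t - (n + 1 + (f a : ℕ))) * B a k * X ^ (p * (k : ℕ)) := by
    intro a k
    simp only [G, r, s]
    rw [Matrix.mul_diagonal, Matrix.diagonal_mul]
  have hGlead : ∀ a k, (G a k).natDegree ≤ n + t ∧ (G a k).coeff (n + t) = Einf (f a) k := by
    intro a k
    have hfa := (f a).2
    rw [hGe]
    simp only [B, Einf]
    split_ifs with hk
    · obtain ⟨d, _, l⟩ := qh_phi M (n + 1 + (f a : ℕ) - p * k)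
      constructor
      · refine natDegree_mul_le.trans ?_
        have := natDegree_mul_le (p := (X ^ (n + t - (n + 1 + (f a : ℕ))) : F[X]))
          (q := (qhPhi M).coeff (n + 1 + (f a : ℕ) - p * k))
        rw [natDegree_X_pow] at this ⊢
        omega
      · rw [← l]
        rw [show n + t = (n + 1 + (f a : ℕ) - p * k + (n + t - (n + 1 + (f a : ℕ)))) + p * k by omega,
          coeff_mul_X_pow, coeff_X_pow_mul']
        rw [if_pos (by omega)]
        congr 1
        omega
    · simp
  obtain ⟨hGd, hGc⟩ := qh_lead K (n + t) G (fun a k => (hGlead a k).1)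
  have hGdet : G.det ≠ 0 := by
    intro hzero
    rw [hzero, coeff_zero] at hGc
    apply hf
    rw [hGc]
    congr 1
    ext a k
    rw [Matrix.map_apply, (hGlead a k).2]
    rfl
  have hGdet2 : G.det = (∏ a, r a) * B.det * ∏ k, s k := by
    simp only [G, Matrix.det_mul, Matrix.det_diagonal]
  have hB0 : B.det ≠ 0 := by
    intro hz
    rw [hz] at hGdet2
    simp at hGdet2
    exact hGdet hGdet2
  have hr0 : (∏ a, r a) ≠ 0 := by
    rw [Finset.prod_ne_zero_iff]; intro a _; exact pow_ne_zero _ X_ne_zero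
  have hs0 : (∏ a, s a) ≠ 0 := by
    rw [Finset.prod_ne_zero_iff]; intro a _; exact pow_ne_zero _ X_ne_zero
  have hdegs : (∏ a, s a).natDegree = p * ∑ k ∈ Finset.range K, k := by
    rw [natDegree_prod _ _ (fun a _ => pow_ne_zero _ X_ne_zero)]
    simp only [natDegree_X_pow]
    rw [← Finset.mul_sum, Fin.sum_univ_eq_sum_range (fun k => k) K]
  have hGd2 : G.det.natDegree = (∏ a, r a).natDegree + B.det.natDegree + (∏ k, s k).natDegree := by
    rw [hGdet2, natDegree_mul (mul_ne_zero hr0 hB0) hs0, natDegree_mul hr0 hB0]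
  have hBdeg := natDegree_le_of_dvd hprod hB0
  rw [natDegree_prod _ _ (fun c _ => pow_ne_zero _ (X_sub_C_ne_zero c))] at hBdeg
  simp only [natDegree_pow, natDegree_X_sub_C, mul_one] at hBdeg
  have hgauss := Finset.sum_range_id_mul_two K
  have hlow : p ^ 4 * (p + 1) ≤ ∑ c : F, (p + 1 - (S c).card / p) + ∑ c : F, (S c).card / p := by
    rw [← Finset.sum_add_distrib]
    calc p ^ 4 * (p + 1) = ∑ c : F, (p + 1) := by simp [hF]
      _ ≤ _ := Finset.sum_le_sum (fun c _ => by omega)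
  have hSdiv : p * ∑ c : F, (S c).card / p = ∑ c : F, (S c).card := by
    rw [Finset.mul_sum]
    exact Finset.sum_congr rfl (fun c _ => Nat.mul_div_cancel' (hSp c))
  have hSdiv2 : ∑ c : F, (S c).card / p ≤ p ^ 5 + p ^ 3 := by
    apply Nat.le_of_mul_le_mul_left _ hppos
    rw [hSdiv]
    calc _ ≤ _ := hsum
      _ = _ := by ring
  set σ := ∑ k ∈ Finset.range K, k with hσ
  set D := ∑ c : F, (p + 1 - (S c).card / p) with hD
  have h1 : D + p * σ ≤ K * (n + t) := by
    rw [hdegs] at hGd2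
    omega
  have hK1 : K - 1 = p + τ := by omega
  rw [hK1] at hgauss
  have h2 : 2 * D ≤ p * (K * (p + τ)) := by
    have e1 : K * (n + t) = p * (K * (p + τ)) := by rw [hn, ht]; ring
    have e2 : 2 * (p * σ) = p * (K * (p + τ)) := by rw [← hgauss]; ring
    omega
  have h3 : K * (p + τ) ≤ (2 * p + 1) * (2 * p) := Nat.mul_le_mul (by omega) (by omega)
  have h4 : p * (K * (p + τ)) ≤ p * ((2 * p + 1) * (2 * p)) := Nat.mul_le_mul_left p h3
  have h5 : p ^ 4 ≤ D + p ^ 3 := by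
    have : p ^ 4 * (p + 1) = p ^ 5 + p ^ 4 := by ring
    omega
  have h6 : 2 * p ^ 4 ≤ p * ((2 * p + 1) * (2 * p)) + 2 * p ^ 3 := by omega
  have h7 : p * ((2 * p + 1) * (2 * p)) + 2 * p ^ 3 = 2 * (p ^ 2 * (3 * p + 1)) := by ring
  have h8 : 2 * p ^ 4 = 2 * (p ^ 2 * (p * p)) := by ring
  rw [h7, h8] at h6
  have h9 : p * p ≤ 3 * p + 1 :=
    Nat.le_of_mul_le_mul_left
      (by rw [mul_assoc, mul_assoc]; exact h6 : 2 * p ^ 2 * (p * p) ≤ 2 * p ^ 2 * (3 * p + 1))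
      (by positivity)
  nlinarith
/-- The projective point spanned by a nonzero vector. -/
def qhPt {F : Type} [Field F] {n : ℕ} (v : Fin n → F) (hv : v ≠ 0) : ProjPoint F n :=
  ⟨Submodule.span F {v}, finrank_span_singleton hv⟩

lemma qh_finite (F : Type) [Field F] [Fintype F] (n : ℕ) : Finite (ProjPoint F n) := by
  unfold ProjPoint
  have : Finite (Submodule F (Fin n → F)) :=
    Finite.of_injective (fun W => (W : Set (Fin n → F))) SetLike.coe_injective
  infer_instance

lemma qh_pt_eq {F : Type} [Field F] {n : ℕ} (v : Fin n → F) (hv : v ≠ 0) (P : ProjPoint F n)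
    (h : v ∈ P.1) : P = qhPt v hv := by
  apply Subtype.ext
  symm
  apply Submodule.eq_of_le_of_finrank_eq
  · exact (Submodule.span_singleton_le_iff_mem v P.1).2 h
  · rw [P.2]; exact finrank_span_singleton hv

lemma qh_pt_mem {F : Type} [Field F] {n : ℕ} (v : Fin n → F) (hv : v ≠ 0)
    (W : Submodule F (Fin n → F)) : qhPt v hv ∈ pointsIn F n W ↔ v ∈ W :=
  Submodule.span_singleton_le_iff_mem v W

open Classical in
lemma qh_count (F : Type) [Field F] [Fintype F] (n : ℕ) (V : Set (ProjPoint F n)) :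
    (Finset.univ.filter (fun v : Fin n → F => v ≠ 0 ∧ ∃ P ∈ V, v ∈ P.1)).card
      = V.ncard * (Fintype.card F - 1) := by
  have := qh_finite F n
  have h1 : Finset.univ.filter (fun v : Fin n → F => v ≠ 0 ∧ ∃ P ∈ V, v ∈ P.1)
      = V.toFinite.toFinset.biUnion (fun P => Finset.univ.filter (fun v : Fin n → F => v ≠ 0 ∧ v ∈ P.1)) := by
    ext v
    simp only [Finset.mem_filter, Finset.mem_univ, true_and, Finset.mem_biUnion, Set.Finite.mem_toFinset]
    constructor
    · rintro ⟨h, P, hP, hv⟩; exact ⟨P, hP, h, hv⟩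
    · rintro ⟨P, hP, h, hv⟩; exact ⟨h, P, hP, hv⟩
  rw [h1, Finset.card_biUnion]
  · rw [Finset.sum_const_nat (m := Fintype.card F - 1), Set.ncard_eq_toFinset_card V]
    intro P _
    have h2 : Finset.univ.filter (fun v : Fin n → F => v ≠ 0 ∧ v ∈ P.1)
        = (Finset.univ.filter (fun v : Fin n → F => v ∈ P.1)).erase 0 := by
      ext v; simp
    rw [h2, Finset.card_erase_of_mem (by simp)]
    congr 1
    rw [← Fintype.card_subtype]
    have := Module.card_eq_pow_finrank (K := F) (V := P.1)
    rw [P.2, pow_one] at this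
    exact this
  · intro P _ P' _ hne
    rw [Function.onFun, Finset.disjoint_left]
    intro v hv hv'
    simp only [Finset.mem_filter, Finset.mem_univ, true_and] at hv hv'
    exact hne ((qh_pt_eq v hv.1 P hv.2).trans (qh_pt_eq v hv.1 P' hv'.2).symm)

open Classical in
lemma qh_hyp_card (F : Type) [Field F] [Fintype F] (n : ℕ) (W : Submodule F (Fin n → F)) :
    (pointsIn F n W).ncard * (Fintype.card F - 1) = Fintype.card F ^ finrank F W - 1 := by
  rw [← qh_count]
  have h2 : Finset.univ.filter (fun v : Fin n → F => v ≠ 0 ∧ ∃ P ∈ pointsIn F n W, v ∈ P.1)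
      = (Finset.univ.filter (fun v : Fin n → F => v ∈ W)).erase 0 := by
    ext v
    simp only [Finset.mem_filter, Finset.mem_univ, true_and, Finset.mem_erase]
    constructor
    · rintro ⟨h, P, hP, hv⟩
      exact ⟨h, hP hv⟩
    · rintro ⟨h, hv⟩
      exact ⟨h, qhPt v h, (qh_pt_mem v h W).2 hv, Submodule.mem_span_singleton_self v⟩
  rw [h2, Finset.card_erase_of_mem (by simp)]
  congr 1
  rw [← Fintype.card_subtype]
  exact Module.card_eq_pow_finrank (K := F) (V := W)

lemma qh_hyp_mod (F : Type) [Field F] [Fintype F] (p n : ℕ) (hp : p.Prime)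
    (hF : Fintype.card F = p ^ 4) (W : Submodule F (Fin n → F)) (hW : 1 ≤ finrank F W) :
    ((pointsIn F n W).ncard : ZMod p) = 1 := by
  have h := qh_hyp_card F n W
  rw [hF] at h
  have h1 : 1 ≤ p ^ 4 := Nat.one_le_pow _ _ hp.pos
  have h2 : 1 ≤ (p ^ 4) ^ finrank F W := Nat.one_le_pow _ _ (by omega)
  have h3 := congrArg (Nat.cast : ℕ → ZMod p) h
  push_cast [Nat.cast_sub h1, Nat.cast_sub h2] at h3
  simp only [CharP.cast_eq_zero] at h3
  rw [zero_pow (by norm_num), zero_pow (by omega)] at h3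
  simpa using h3

lemma qh_functional {F : Type} [Field F] (n : ℕ) (H : Submodule F (Fin n → F))
    (hn : 1 ≤ n) (hH : finrank F H = n - 1) :
    ∃ h : (Fin n → F) →ₗ[F] F, ∀ v, v ∈ H ↔ h v = 0 := by
  have hlt : H < ⊤ := by
    rw [lt_top_iff_ne_top]
    rintro rfl
    rw [finrank_top, finrank_fin_fun] at hH
    omega
  obtain ⟨h, h0, hle⟩ := Submodule.exists_le_ker_of_lt_top H hlt
  refine ⟨h, fun v => ?_⟩
  have : H = LinearMap.ker h := by
    apply Submodule.eq_of_le_of_finrank_eq hle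
    have := Module.Dual.finrank_ker_add_one_of_ne_zero h0
    rw [finrank_fin_fun] at this
    omega
  rw [this, LinearMap.mem_ker]

open Classical in
lemma qh_code (F : Type) [Field F] [Fintype F] (p n : ℕ) (hp : p.Prime)
    [Fintype (ProjPoint F n)]
    (hF : Fintype.card F = p ^ 4) (hn : 2 ≤ n) (e0 e1 e2 : Fin n → F)
    (he2 : e2 ≠ 0) (he1 : ∀ m : F, e1 + m • e2 ≠ 0)
    (he0 : ∀ c y : F, e0 + c • e1 + y • e2 ≠ 0)
    (f : ProjPoint F n → ZMod p) (hf : f ∈ hypCode F p n) :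
    ∃ (M : Multiset (F × F)) (κ : F → ZMod p) (κ' : ZMod p),
      (∀ c y, f (qhPt _ (he0 c y)) = ((M.map (fun z => z.1 * c + z.2)).count y : ZMod p) + κ c) ∧
      (∀ m, f (qhPt _ (he1 m)) = ((M.map Prod.fst).count m : ZMod p) + κ') ∧
      (M.card : ZMod p) + f (qhPt _ he2) = ∑ P, f P := by
  have : NeZero p := ⟨hp.ne_zero⟩
  unfold hypCode at hf
  induction hf using Submodule.span_induction with
  | mem x hx =>
    obtain ⟨H, hH, rfl⟩ := hx
    obtain ⟨h, hh⟩ := qh_functional n H (by omega) hH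
    have hval : ∀ v (hv : v ≠ 0), charVec F p n (pointsIn F n H) (qhPt v hv)
        = if h v = 0 then 1 else 0 := by
      intro v hv
      simp only [charVec, Set.indicator_apply, qh_pt_mem, hh, Pi.one_apply]
    have hsum : ∑ P, charVec F p n (pointsIn F n H) P = 1 := by
      rw [← qh_hyp_mod F p n hp hF H (by omega)]
      simp only [charVec, Set.indicator_apply, Pi.one_apply]
      rw [Finset.sum_boole, Set.ncard_eq_toFinset_card']
      congr 2
      ext P; simp
    rw [hsum]
    simp only [hval, map_add, map_smul, smul_eq_mul]
    by_cases h2 : h e2 = 0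
    · refine ⟨0, fun c => if h e0 + c * h e1 = 0 then 1 else 0, if h e1 = 0 then 1 else 0, ?_, ?_, ?_⟩
      · intro c y; simp [h2]
      · intro m; simp [h2]
      · simp [h2]
    · refine ⟨{(-h e1 / h e2, -h e0 / h e2)}, fun c => 0, 0, ?_, ?_, ?_⟩
      · intro c y
        rw [Multiset.map_singleton, Multiset.count_singleton]
        have : h e0 + c * h e1 + y * h e2 = 0 ↔ y = -h e1 / h e2 * c + -h e0 / h e2 := by
          constructor
          · intro H
            field_simp
            linear_combination H
          · intro H
            rw [H]; field_simp; ring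
        simp only [this]
        split_ifs <;> simp
      · intro m
        rw [Multiset.map_singleton, Multiset.count_singleton]
        have : h e1 + m * h e2 = 0 ↔ m = -h e1 / h e2 := by
          constructor
          · intro H
            field_simp
            linear_combination H
          · intro H
            rw [H]; field_simp; ring
        simp only [this]
        split_ifs <;> simp
      · simp [h2]
  | zero =>
    exact ⟨0, fun _ => 0, 0, by simp, by simp, by simp⟩
  | add x y _ _ hx hy =>
    obtain ⟨M, κ, κ', a1, a2, a3⟩ := hx
    obtain ⟨N, μ, μ', b1, b2, b3⟩ := hy
    refine ⟨M + N, fun c => κ c + μ c, κ' + μ', ?_, ?_, ?_⟩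
    · intro c y
      rw [Pi.add_apply, a1, b1, Multiset.map_add, Multiset.count_add]
      push_cast; ring
    · intro m
      rw [Pi.add_apply, a2, b2, Multiset.map_add, Multiset.count_add]
      push_cast; ring
    · simp only [Pi.add_apply]
      rw [Finset.sum_add_distrib, ← a3, ← b3, Multiset.card_add]
      push_cast; ring
  | smul a x _ hx =>
    obtain ⟨M, κ, κ', a1, a2, a3⟩ := hx
    refine ⟨a.val • M, fun c => a * κ c, a * κ', ?_, ?_, ?_⟩
    · intro c y
      rw [Pi.smul_apply, a1, Multiset.map_nsmul, Multiset.count_nsmul, smul_eq_mul]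
      push_cast; rw [ZMod.natCast_zmod_val]; ring
    · intro m
      rw [Pi.smul_apply, a2, Multiset.map_nsmul, Multiset.count_nsmul, smul_eq_mul]
      push_cast; rw [ZMod.natCast_zmod_val]; ring
    · simp only [Pi.smul_apply, smul_eq_mul]
      rw [← Finset.mul_sum, ← a3, Multiset.card_nsmul]
      push_cast; rw [ZMod.natCast_zmod_val]; ring
lemma qh_arith (q r X : ℕ) (hq : 4 ≤ q) (hr : 4 ≤ r)
    (hX : (X : ℤ) = ((q : ℤ) ^ (r + 1) + (-1) ^ r) * ((q : ℤ) ^ r - (-1) ^ r))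
    (h : ((q ^ 2) ^ (r + 1) - (q ^ 2) ^ 2) * (q ^ 3 + q ^ 2 + 1) ≤ (q ^ 2) ^ 2 * X) : False := by
  obtain ⟨s, rfl⟩ : ∃ s, r = s + 1 := ⟨r - 1, by omega⟩
  have h1 : (q ^ 2) ^ (s + 1 + 1) = (q ^ 2) ^ 2 * (q ^ s * q ^ s) := by ring
  have ha1 : q ^ 3 ≤ q ^ s := Nat.pow_le_pow_right (by omega) (by omega)
  have h2 : (q ^ s * q ^ s - 1) * (q ^ 3 + q ^ 2 + 1) ≤ X := by
    rw [h1, show (q ^ 2) ^ 2 * (q ^ s * q ^ s) - (q ^ 2) ^ 2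
      = (q ^ 2) ^ 2 * (q ^ s * q ^ s - 1) by rw [Nat.mul_sub, mul_one], mul_assoc] at h
    exact Nat.le_of_mul_le_mul_left h (by positivity)
  set a := q ^ s with ha
  have h64 : 64 ≤ q ^ 3 := le_trans (by norm_num) (Nat.pow_le_pow_left hq 3)
  have haa : 1 ≤ a * a := by nlinarith
  have hX2 : (X : ℤ) ≤ (q : ℤ) ^ 3 * (a * a) + (q : ℤ) ^ 2 * a := by
    have hq' : (4 : ℤ) ≤ q := by exact_mod_cast hq
    have hac : (q : ℤ) ^ s = (a : ℤ) := by rw [ha]; push_cast; rfl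
    have e1 : (q : ℤ) ^ (s + 1 + 1) = q ^ 2 * a := by rw [← hac]; ring
    have e2 : (q : ℤ) ^ (s + 1) = q * a := by rw [← hac]; ring
    have ha0 : (0 : ℤ) ≤ a := by positivity
    rw [hX, e1, e2]
    have hqa : (0 : ℤ) ≤ q * a := by positivity
    have hqqa : (q : ℤ) * a ≤ q ^ 2 * a := by nlinarith
    rcases neg_one_pow_eq_or ℤ (s + 1) with h | h <;> rw [h]
    · have : ((q : ℤ) ^ 2 * a + 1) * (q * a - 1) = q ^ 3 * (a * a) + q * a - q ^ 2 * a - 1 := by ring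
      rw [this]; linarith
    · have : ((q : ℤ) ^ 2 * a + -1) * (q * a - -1) = q ^ 3 * (a * a) - q * a + q ^ 2 * a - 1 := by ring
      rw [this]; linarith
  have hX3 : X ≤ q ^ 3 * (a * a) + q ^ 2 * a := by exact_mod_cast hX2
  obtain ⟨b, hb⟩ : ∃ b, a * a = b + 1 := ⟨a * a - 1, by omega⟩
  have h3 : b * (q ^ 3 + q ^ 2 + 1) ≤ q ^ 3 * (b + 1) + q ^ 2 * a := by
    rw [hb] at h2 hX3
    exact h2.trans hX3
  have h4 : b * (q ^ 2 + 1) ≤ q ^ 3 + q ^ 2 * a := by nlinarith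
  have h5 : 64 * a ≤ b + 1 := by rw [← hb]; exact Nat.mul_le_mul_right _ (by omega)
  have h6 : 16 ≤ q ^ 2 := le_trans (by norm_num) (Nat.pow_le_pow_left hq 2)
  have h7 : (63 * a) * (q ^ 2 + 1) ≤ b * (q ^ 2 + 1) := Nat.mul_le_mul_right _ (by omega)
  nlinarith

open Classical in
lemma qh_e0 (F : Type) [Field F] [Fintype F] (p r : ℕ) (hp : 3 < p) (hr : 4 ≤ r)
    (hF : Fintype.card F = p ^ 4) (V : Set (ProjPoint F (r + 1)))
    (hV : (V.ncard : ℤ) * (((p ^ 2 : ℕ) : ℤ) ^ 2 - 1)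
      = (((p ^ 2 : ℕ) : ℤ) ^ (r + 1) + (-1) ^ r) * (((p ^ 2 : ℕ) : ℤ) ^ r - (-1) ^ r))
    (l : Submodule F (Fin (r + 1) → F)) (hl : finrank F l = 2) :
    ∃ e0 : Fin (r + 1) → F, e0 ∉ l ∧
      (Finset.univ.filter (fun w : Fin (r + 1) → F => w ∈ l ∧ ∃ P ∈ V, e0 + w ∈ P.1)).card
        ≤ p ^ 6 + p ^ 4 := by
  by_contra hcon
  push Not at hcon
  have hc := qh_count F (r + 1) V
  set X := Finset.univ.filter (fun v : Fin (r + 1) → F => v ≠ 0 ∧ ∃ P ∈ V, v ∈ P.1) with hX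
  set L := Finset.univ.filter (fun v : Fin (r + 1) → F => v ∈ l) with hL
  have hLc : L.card = ((p ^ 2) ^ 2) ^ 2 := by
    rw [hL, ← Fintype.card_subtype]
    have := Module.card_eq_pow_finrank (K := F) (V := l)
    rw [hl, hF] at this
    rw [show ((p ^ 2) ^ 2) ^ 2 = (p ^ 4) ^ 2 by ring]
    exact this
  have hLc2 : Lᶜ.card = ((p ^ 2) ^ 2) ^ (r + 1) - ((p ^ 2) ^ 2) ^ 2 := by
    rw [Finset.card_compl, hLc, Fintype.card_fun, hF, Fintype.card_fin]
    congr 2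
    ring
  apply qh_arith (p ^ 2) r X.card (by nlinarith) hr
  · rw [hc, ← hV, hF]
    rw [Nat.cast_mul, Nat.cast_sub (Nat.one_le_pow _ _ (by omega))]
    push_cast
    ring
  · rw [← hLc2, ← hLc]
    calc Lᶜ.card * ((p ^ 2) ^ 3 + (p ^ 2) ^ 2 + 1)
        ≤ ∑ v ∈ Lᶜ, (L.filter (fun w => v + w ∈ X)).card := by
          rw [← smul_eq_mul, ← Finset.sum_const]
          apply Finset.sum_le_sum
          intro v hv
          have hv' : v ∉ l := by simpa [hL] using hv
          have h1 := hcon v hv'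
          have h2 : Finset.univ.filter (fun w : Fin (r + 1) → F => w ∈ l ∧ ∃ P ∈ V, v + w ∈ P.1)
              = L.filter (fun w => v + w ∈ X) := by
            ext w
            simp only [hL, hX, Finset.mem_filter, Finset.mem_univ, true_and]
            refine and_congr_right fun hw => ?_
            constructor
            · intro h
              refine ⟨fun h0 => hv' ?_, h⟩
              rw [eq_neg_of_add_eq_zero_left h0]
              exact l.neg_mem hw
            · exact fun h => h.2
          rw [h2] at h1
          calc (p ^ 2) ^ 3 + (p ^ 2) ^ 2 + 1 = p ^ 6 + p ^ 4 + 1 := by ring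
            _ ≤ _ := h1
      _ = ∑ w ∈ L, (Lᶜ.filter (fun v => v + w ∈ X)).card := by
          simp only [Finset.card_filter]
          exact Finset.sum_comm
      _ ≤ ∑ w ∈ L, X.card := by
          apply Finset.sum_le_sum
          intro w _
          apply Finset.card_le_card_of_injOn (fun v => v + w)
          · intro v hv
            exact (Finset.mem_filter.1 hv).2
          · intro a _ b _ hab
            exact add_right_cancel hab
      _ = L.card * X.card := by rw [Finset.sum_const, smul_eq_mul]

lemma qh_size_mod (p r N : ℕ) (hr : 4 ≤ r)
    (hV : (N : ℤ) * (((p ^ 2 : ℕ) : ℤ) ^ 2 - 1)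
      = (((p ^ 2 : ℕ) : ℤ) ^ (r + 1) + (-1) ^ r) * (((p ^ 2 : ℕ) : ℤ) ^ r - (-1) ^ r)) :
    (N : ZMod p) = 1 := by
  have h := congrArg (Int.cast : ℤ → ZMod p) hV
  push_cast at h
  simp only [CharP.cast_eq_zero] at h
  have h0 : r ≠ 0 := by omega
  simp only [ne_eq, OfNat.ofNat_ne_zero, not_false_eq_true, zero_pow, h0, Nat.succ_ne_zero] at h
  have h2 : ((-1 : ZMod p) ^ r) * (-1) ^ r = 1 := by
    rw [← mul_pow]; simp
  linear_combination -h + h2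

lemma qh_e0' (F : Type) [Field F] [Fintype F] (p r : ℕ) (hp : 3 < p) (hr : 4 ≤ r)
    (hF : Fintype.card F = p ^ 4) (V : Set (ProjPoint F (r + 1)))
    (hV : (V.ncard : ℤ) * (((p ^ 2 : ℕ) : ℤ) ^ 2 - 1)
      = (((p ^ 2 : ℕ) : ℤ) ^ (r + 1) + (-1) ^ r) * (((p ^ 2 : ℕ) : ℤ) ^ r - (-1) ^ r))
    (l : Submodule F (Fin (r + 1) → F)) (hl : finrank F l = 2) :
    ∃ e0 : Fin (r + 1) → F, e0 ∉ l ∧ ∃ Z : Finset (Fin (r + 1) → F),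
      (∀ w, w ∈ Z ↔ w ∈ l ∧ ∃ P ∈ V, e0 + w ∈ P.1) ∧ Z.card ≤ p ^ 6 + p ^ 4 := by
  classical
  obtain ⟨e0, h1, h2⟩ := qh_e0 F p r hp hr hF V hV l hl
  exact ⟨e0, h1, _, fun w => by rw [Finset.mem_filter]; simp only [Finset.mem_univ, true_and], h2⟩

set_option maxHeartbeats 4000000

/-- in PG(r, p⁴) (so `q = p²`), a line with at least `p⁴ - p² + 1`
points of `V` has at least `p⁴ - p + 1` points of `V`. -/
theorem stmt15 (p r : ℕ) (hp : p.Prime) (hp3 : 3 < p) (hr : 4 ≤ r)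
    (F : Type) [Field F] [Fintype F] (hF : Fintype.card F = p ^ 4)
    (V : Set (ProjPoint F (r + 1))) (hV : IsQuasiHermitian F (p ^ 2) r V)
    (hcode : charVec F p (r + 1) V ∈ hypCode F p (r + 1))
    (ℓ : Submodule F (Fin (r + 1) → F)) (hℓ : finrank F ℓ = 2)
    (hsec : p ^ 4 - p ^ 2 + 1 ≤ secant F (r + 1) V ℓ) :
    p ^ 4 - p + 1 ≤ secant F (r + 1) V ℓ := by
  classical
  have : Fact p.Prime := ⟨hp⟩
  have hfin := qh_finite F (r + 1)
  have : Fintype (ProjPoint F (r + 1)) := Fintype.ofFinite _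
  have hchar : CharP F p := by
    obtain ⟨p', hp'⟩ := CharP.exists F
    obtain ⟨k, hk1, hk2⟩ := FiniteField.card F p'
    rw [hF] at hk2
    have h1 : p ∣ p' ^ (k : ℕ) := by rw [← hk2]; exact dvd_pow_self p (by norm_num)
    have h2 : p = p' := (Nat.prime_dvd_prime_iff_eq hp hk1).1 (hp.dvd_of_dvd_pow h1)
    rw [h2]; exact hp'
  have hp24 : p ^ 2 ≤ p ^ 4 := Nat.pow_le_pow_right hp.pos (by norm_num)
  have hpp : p ≤ p ^ 4 := Nat.le_self_pow (by norm_num) p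
  have hp24' : p ^ 2 < p ^ 4 := Nat.pow_lt_pow_right hp.one_lt (by norm_num)
  by_contra hcon
  -- two points on the line
  obtain ⟨P1, hP1, P2, hP2, hne⟩ : ∃ P1 ∈ V ∩ pointsIn F (r + 1) ℓ,
      ∃ P2 ∈ V ∩ pointsIn F (r + 1) ℓ, P1 ≠ P2 := by
    have : 1 < (V ∩ pointsIn F (r + 1) ℓ).ncard := by
      have : 1 < secant F (r + 1) V ℓ := by omega
      exact this
    rwa [Set.one_lt_ncard_iff_nontrivial] at this
  have hex : ∀ P : ProjPoint F (r + 1), ∃ v ∈ P.1, v ≠ 0 := by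
    intro P
    apply Submodule.exists_mem_ne_zero_of_ne_bot
    intro h
    have := P.2
    rw [h, finrank_bot] at this
    omega
  obtain ⟨e1, he1m, he1⟩ := hex P1
  obtain ⟨e2, he2m, he2⟩ := hex P2
  have hP1e := qh_pt_eq e1 he1 P1 he1m
  have hP2e := qh_pt_eq e2 he2 P2 he2m
  have h1l : e1 ∈ ℓ := hP1.2 he1m
  have h2l : e2 ∈ ℓ := hP2.2 he2m
  have hnm : ∀ m : F, e1 + m • e2 ≠ 0 := by
    intro m h
    apply hne
    rw [hP1e]
    symm
    apply qh_pt_eq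
    rw [eq_neg_of_add_eq_zero_left h]
    exact P2.1.neg_mem (P2.1.smul_mem m he2m)
  have hli : LinearIndependent F ![e1, e2] := by
    rw [LinearIndependent.pair_iff]
    intro s t hst
    have hs : s = 0 := by
      by_contra hs
      apply hnm (s⁻¹ * t)
      have := congrArg (fun v => s⁻¹ • v) hst
      simpa [smul_add, smul_smul, hs] using this
    rw [hs, zero_smul, zero_add, smul_eq_zero] at hst
    exact ⟨hs, hst.resolve_right he2⟩
  have hpair : ∀ a b c d : F, a • e1 + b • e2 = c • e1 + d • e2 → a = c ∧ b = d := by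
    intro a b c d h
    rw [LinearIndependent.pair_iff] at hli
    have := hli (a - c) (b - d) (by
      rw [sub_smul, sub_smul, ← sub_eq_zero.2 h]; abel)
    exact ⟨sub_eq_zero.1 this.1, sub_eq_zero.1 this.2⟩
  have hspan : Submodule.span F {e1, e2} = ℓ := by
    apply Submodule.eq_of_le_of_finrank_eq
    · rw [Submodule.span_le]
      rintro x (rfl | rfl)
      · exact h1l
      · exact h2l
    · rw [hℓ]
      have := finrank_span_eq_card hli
      rw [Matrix.range_cons_cons_empty] at this
      simpa using this
  have hmem : ∀ w ∈ ℓ, ∃ c y : F, c • e1 + y • e2 = w := by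
    intro w hw
    rw [← hspan, Submodule.mem_span_pair] at hw
    exact hw
  obtain ⟨e0, he0l, Z, hZ, he0c⟩ := qh_e0' F p r hp3 hr hF V hV.1 ℓ hℓ
  have he0 : ∀ c y : F, e0 + c • e1 + y • e2 ≠ 0 := by
    intro c y h
    apply he0l
    rw [add_assoc] at h
    rw [eq_neg_of_add_eq_zero_left h]
    exact ℓ.neg_mem (ℓ.add_mem (ℓ.smul_mem c h1l) (ℓ.smul_mem y h2l))
  obtain ⟨M, κ, κ', hM1, hM2, hM3⟩ := qh_code F p (r + 1) hp hF (by omega) e0 e1 e2 he2 hnm he0 _ hcode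
  have hval : ∀ P, charVec F p (r + 1) V P = if P ∈ V then 1 else 0 := by
    intro P; simp only [charVec, Set.indicator_apply, Pi.one_apply]
  simp only [hval] at hM1 hM2 hM3
  have hM : (M.card : ZMod p) = 0 := by
    rw [← hP2e, if_pos hP2.1, Finset.sum_boole] at hM3
    have h1 := qh_size_mod p r V.ncard hr hV.1
    have h2 : (Finset.univ.filter (fun P => P ∈ V)).card = V.ncard := by
      rw [Set.ncard_eq_toFinset_card']
      congr 1
      ext P; simp
    rw [h2, h1] at hM3
    simpa using hM3
  have hQ0 : (Fintype.card F : ZMod p) = 0 := by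
    rw [hF]; push_cast; simp
  have hcount : ∀ N : Multiset F, ∑ y : F, (N.count y : ZMod p) = N.card := by
    intro N
    rw [← Nat.cast_sum]
    congr 1
    exact Multiset.sum_count_eq_card (fun a _ => Finset.mem_univ a)
  let S : F → Finset F := fun c => Finset.univ.filter (fun y => qhPt _ (he0 c y) ∈ V)
  let A : Finset F := Finset.univ.filter (fun m => qhPt _ (hnm m) ∉ V)
  have hSp : ∀ c, p ∣ (S c).card := by
    intro c
    rw [← ZMod.natCast_eq_zero_iff]
    have h1 : ∑ y : F, (if qhPt _ (he0 c y) ∈ V then (1 : ZMod p) else 0) = (S c).card := by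
      rw [Finset.sum_boole]
    rw [← h1]
    simp only [hM1]
    rw [Finset.sum_add_distrib, hcount, Multiset.card_map, hM, Finset.sum_const, nsmul_eq_mul,
      Finset.card_univ, hQ0]
    simp
  have hAc : ((Finset.univ.filter (fun m => qhPt _ (hnm m) ∈ V)).card : ZMod p) = 0 := by
    rw [← Finset.sum_boole]
    simp only [hM2]
    rw [Finset.sum_add_distrib, hcount, Multiset.card_map, hM, Finset.sum_const, nsmul_eq_mul,
      Finset.card_univ, hQ0]
    simp
  have hAtot : (Finset.univ.filter (fun m => qhPt _ (hnm m) ∈ V)).card + A.card = p ^ 4 := by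
    rw [← hF]
    exact Finset.card_filter_add_card_filter_not (s := Finset.univ) _
  have hAp : p ∣ A.card := by
    rw [ZMod.natCast_eq_zero_iff] at hAc
    exact (Nat.dvd_add_right hAc).1 (hAtot ▸ dvd_pow_self p (by norm_num))
  have hsecA : secant F (r + 1) V ℓ
      = (Finset.univ.filter (fun m => qhPt _ (hnm m) ∈ V)).card + 1 := by
    have hset : V ∩ pointsIn F (r + 1) ℓ = insert P2
        (Set.image (fun m => qhPt _ (hnm m)) (Finset.univ.filter (fun m => qhPt _ (hnm m) ∈ V) : Finset F)) := by
      ext P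
      constructor
      · rintro ⟨hPV, hPl⟩
        obtain ⟨v, hvP, hv0⟩ := hex P
        obtain ⟨c, y, rfl⟩ := hmem v (hPl hvP)
        by_cases hc : c = 0
        · left
          rw [qh_pt_eq _ hv0 P hvP]
          symm
          apply qh_pt_eq
          rw [hc, zero_smul, zero_add]
          exact P2.1.smul_mem y he2m
        · right
          have hP : P = qhPt _ (hnm (c⁻¹ * y)) := by
            apply qh_pt_eq
            have := P.1.smul_mem c⁻¹ hvP
            simpa [smul_add, smul_smul, hc] using this
          refine ⟨c⁻¹ * y, ?_, hP.symm⟩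
          rw [Finset.mem_coe, Finset.mem_filter]
          exact ⟨Finset.mem_univ _, hP ▸ hPV⟩
      · rintro (rfl | ⟨m, hm, rfl⟩)
        · exact hP2
        · rw [Finset.mem_coe, Finset.mem_filter] at hm
          exact ⟨hm.2, (qh_pt_mem _ _ ℓ).2 (ℓ.add_mem h1l (ℓ.smul_mem m h2l))⟩
    have hself : ∀ v (hv : v ≠ 0), v ∈ (qhPt (F := F) (n := r + 1) v hv).1 :=
      fun v hv => Submodule.mem_span_singleton_self v
    unfold secant
    rw [hset, Set.ncard_insert_of_notMem, Set.ncard_image_of_injective, Set.ncard_coe_finset]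
    · intro m m' hmm
      have h1 : e1 + m • e2 ∈ (qhPt _ (hnm m')).1 := by
        have := hself _ (hnm m)
        rwa [show qhPt _ (hnm m) = qhPt _ (hnm m') from hmm] at this
      obtain ⟨a, ha⟩ := Submodule.mem_span_singleton.1 h1
      have h2 := hpair a (a * m') 1 m (by rw [one_smul, ← ha, smul_add, smul_smul])
      rw [← h2.2, h2.1, one_mul]
    · rintro ⟨m, _, hm⟩
      have h1 : e2 ∈ (qhPt _ (hnm m)).1 := by
        rw [show qhPt _ (hnm m) = P2 from hm]; exact he2m
      obtain ⟨a, ha⟩ := Submodule.mem_span_singleton.1 h1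
      have h2 := hpair a (a * m) 0 1 (by rw [zero_smul, one_smul, zero_add, ← smul_smul, ← smul_add, ha])
      have h3 := h2.2
      rw [h2.1, zero_mul] at h3
      exact zero_ne_one h3
  have hSmem : ∀ c y, y ∈ S c ↔ qhPt _ (he0 c y) ∈ V := by
    intro c y; simp [S]
  have hAmem : ∀ m, m ∈ A ↔ qhPt _ (hnm m) ∉ V := by
    intro m; simp [A]
  refine qh_core p hp3 hF M S κ ?_ A κ' ?_ ?_ hSp hAp (by omega) (by omega) ?_
  · intro c y
    rw [← hM1 c y]
    simp only [hSmem]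
  · intro m
    rw [← hM2 m]
    simp only [hAmem]
    by_cases hmV : qhPt _ (hnm m) ∈ V <;> simp only [hmV, not_true, not_false_iff, if_true, if_false]
  · rw [hAmem, not_not]
    have : P1 = qhPt _ (hnm 0) := by
      apply qh_pt_eq
      rw [zero_smul, add_zero]
      exact he1m
    rw [← this]
    exact hP1.1
  · refine le_trans ?_ he0c
    rw [← Finset.card_sigma]
    apply Finset.card_le_card_of_injOn (fun z : (_ : F) × F => z.1 • e1 + z.2 • e2)
    · rintro ⟨c, y⟩ hz
      have hz' : y ∈ S c := by simpa using hz
      rw [Finset.mem_coe, hZ]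
      refine ⟨ℓ.add_mem (ℓ.smul_mem c h1l) (ℓ.smul_mem y h2l), _,
        (hSmem c y).1 hz', ?_⟩
      rw [← add_assoc]
      exact Submodule.mem_span_singleton_self _
    · rintro ⟨c, y⟩ _ ⟨c', y'⟩ _ h
      obtain ⟨h1, h2⟩ := hpair c y c' y' h
      rw [h1, h2]
end

section
/- Let r ≥ 4 and let p > 3 be prime, and let V be a quasi-Hermitian variety of PG(r,p^4) whose characteristic vector v^V belongs to C_p. Then every plane π of PG(r,p^4) satisfies either |π ∩ V| ≤ p^6 + 2p^4 - p^2 - p + 1 or |π ∩ V| ≥ p^8 - p^5 + p^4 - p + 1. -/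
/-!
Common framework: `ProjPoint F n` is the set of points of the projective space
PG(n-1, |F|) (so PG(r, q²) corresponds to `n = r + 1` and `Fintype.card F = q ^ 2`).
Projective subspaces of projective dimension `k` are the submodules of `Fin n → F`
of `finrank` equal to `k + 1`; lines have finrank 2, planes finrank 3 and
hyperplanes finrank `n - 1 = r`.
-/

open Module Matrix

open Polynomial in
theorem hk_dvd {F : Type} [Field F] (s n : ℕ) (mu : ℕ → F[X]) (y : F) (T : Finset F)
    (hT : T.card = n) (h : F → F) (hmu : ∀ i, (mu i).eval y = ∑ x ∈ T, x ^ i * h x) :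
    (X - C y) ^ (s - n) ∣ (Matrix.of fun i j : Fin s => mu (i + j)).det := by
  classical
  let pp : Fin s → F[X] := fun j => if (j : ℕ) < n then X ^ (j : ℕ)
    else X ^ ((j : ℕ) - n) * ∏ x ∈ T, (X - C x)
  have hmonT : (∏ x ∈ T, (X - C x)).Monic := monic_prod_of_monic _ _ (fun x _ => monic_X_sub_C x)
  have hdegT : (∏ x ∈ T, (X - C x)).natDegree = n := by
    rw [natDegree_prod_of_monic _ _ (fun x _ => monic_X_sub_C x)]; simp [hT]
  have hmon : ∀ j, (pp j).Monic := by
    intro j; simp only [pp]; split_ifs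
    · exact monic_X_pow _
    · exact (monic_X_pow _).mul hmonT
  have hdeg : ∀ j, (pp j).natDegree = j := by
    intro j; simp only [pp]; split_ifs with hj
    · simp
    · rw [(monic_X_pow _).natDegree_mul hmonT, hdegT]; simp; omega
  have hPdet : (Matrix.of fun i j : Fin s => C ((pp j).coeff i)).det = 1 := by
    have := Matrix.det_matrixOfPolynomials pp hdeg hmon
    have h2 := congrArg (C : F →+* F[X]) this
    rw [RingHom.map_det, map_one] at h2
    rw [← h2]; congr 1
  have hmul : (Matrix.of fun i j : Fin s => mu (i + j)).det =
      ((Matrix.of fun i j : Fin s => mu (i + j)) *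
        (Matrix.of fun i j : Fin s => C ((pp j).coeff i))).det := by
    rw [Matrix.det_mul, hPdet, mul_one]
  have hzero : ∀ i j : Fin s, n ≤ (j : ℕ) → (X - C y) ∣
      ((Matrix.of fun i j : Fin s => mu (i + j)) *
        (Matrix.of fun i j : Fin s => C ((pp j).coeff i))) i j := by
    intro i j hj
    rw [dvd_iff_isRoot, IsRoot, Matrix.mul_apply, eval_finsetSum]
    simp only [Matrix.of_apply, eval_mul, eval_C, hmu]
    have : ∀ k : Fin s, (∑ x ∈ T, x ^ ((i : ℕ) + k) * h x) * (pp j).coeff k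
        = ∑ x ∈ T, x ^ (i : ℕ) * h x * ((pp j).coeff k * x ^ (k : ℕ)) := by
      intro k; rw [Finset.sum_mul]; refine Finset.sum_congr rfl fun x _ => ?_; ring
    simp only [this]
    rw [Finset.sum_comm]
    refine Finset.sum_eq_zero fun x hx => ?_
    rw [← Finset.mul_sum]
    have e : ∑ k : Fin s, (pp j).coeff k * x ^ (k : ℕ) = (pp j).eval x := by
      rw [eval_eq_sum_range' (n := s) (by rw [hdeg]; exact j.2), Finset.sum_range]
    rw [e]
    have : (pp j).eval x = 0 := by
      simp only [pp, if_neg (not_lt.2 hj), eval_mul, eval_prod]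
      rw [Finset.prod_eq_zero hx (by simp)]; simp
    rw [this, mul_zero]
  rw [hmul, Matrix.det_apply]
  refine Finset.dvd_sum fun σ _ => ?_
  rw [Units.smul_def, zsmul_eq_mul]
  refine Dvd.dvd.mul_left ?_ _
  have hc : (Finset.univ.filter fun j : Fin s => n ≤ (j : ℕ)).card = s - n := by
    rw [Finset.card_filter, Fin.sum_univ_eq_sum_range (fun j => if n ≤ j then 1 else 0),
      ← Finset.card_filter]
    have : (Finset.range s).filter (fun j => n ≤ j) = Finset.Ico n s := by
      ext; simp; tauto
    rw [this]; simp
  rw [← hc, ← Finset.prod_const]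
  refine Dvd.dvd.trans (Finset.prod_dvd_prod_of_dvd _ _ fun j hj => hzero (σ j) j (by simpa using hj)) ?_
  exact Finset.prod_dvd_prod_of_subset _ _ _ (Finset.subset_univ _)

open Polynomial in
theorem hk_deg {F : Type} [Field F] (s : ℕ) (mu : ℕ → F[X]) (hd : ∀ i, (mu i).natDegree ≤ i) :
    (Matrix.of fun i j : Fin s => mu (i + j)).det.natDegree ≤ s * (s - 1) := by
  rw [Matrix.det_apply]
  refine natDegree_sum_le_of_forall_le _ _ fun σ _ => ?_
  rw [Units.smul_def]
  refine (natDegree_smul_le _ _).trans ?_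
  refine (natDegree_prod_le _ _).trans ?_
  calc ∑ i, ((Matrix.of fun i j : Fin s => mu (i + j)) (σ i) i).natDegree
      ≤ ∑ i : Fin s, (((σ i : Fin s) : ℕ) + (i : ℕ)) := Finset.sum_le_sum fun i _ => hd _
    _ = ∑ i : Fin s, (i : ℕ) + ∑ i : Fin s, (i : ℕ) := by
      rw [Finset.sum_add_distrib, Equiv.sum_comp σ (fun i => (i : ℕ))]
    _ = s * (s - 1) := by
      rw [Fin.sum_univ_eq_sum_range (fun i => i), ← Finset.sum_range_id_mul_two]; ring

theorem hk_ne {F : Type} [Field F] (s : ℕ) (T : Finset F)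
    (hT : T.card = s) (h : F → F) (hh : ∀ x ∈ T, h x ≠ 0) :
    (Matrix.of fun i j : Fin s => ∑ x ∈ T, x ^ ((i : ℕ) + j) * h x).det ≠ 0 := by
  subst hT
  let e := T.equivFin
  let v : Fin T.card → F := fun i => (e.symm i : F)
  have hv : Function.Injective v := Subtype.val_injective.comp e.symm.injective
  have : (Matrix.of fun i j : Fin T.card => ∑ x ∈ T, x ^ ((i : ℕ) + j) * h x) =
      (Matrix.vandermonde v).transpose * Matrix.diagonal (fun i => h (v i)) * Matrix.vandermonde v := by
    ext i j
    rw [Matrix.mul_apply]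
    simp only [Matrix.mul_diagonal, Matrix.of_apply, Matrix.transpose_apply, Matrix.vandermonde_apply]
    rw [← Finset.sum_coe_sort T, ← Equiv.sum_comp e.symm]
    refine Finset.sum_congr rfl fun k _ => ?_
    simp only [v]; ring
  rw [this, Matrix.det_mul, Matrix.det_mul, Matrix.det_transpose, Matrix.det_diagonal]
  have h1 := Matrix.det_vandermonde_ne_zero_iff.2 hv
  refine mul_ne_zero (mul_ne_zero h1 (Finset.prod_ne_zero_iff.2 fun i _ => hh _ (e.symm i).2)) h1

open Polynomial in
theorem hk_main {F : Type} [Field F] [Fintype F] [DecidableEq F] (h : F → F → F)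
    (mu : ℕ → F[X]) (hd : ∀ i, (mu i).natDegree ≤ i)
    (hmu : ∀ i y, (mu i).eval y = ∑ x, x ^ i * h x y) (y0 : F) (s : ℕ)
    (hs : (Finset.univ.filter fun x => h x y0 ≠ 0).card = s) :
    Fintype.card F * s ≤ (∑ y, (Finset.univ.filter fun x => h x y ≠ 0).card) + s * (s - 1) := by
  classical
  have hmu' : ∀ y i, (mu i).eval y =
      ∑ x ∈ Finset.univ.filter (fun x => h x y ≠ 0), x ^ i * h x y := by
    intro y i
    rw [hmu, Finset.sum_filter]
    refine Finset.sum_congr rfl fun x _ => ?_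
    by_cases hx : h x y = 0 <;> simp [hx]
  set D := (Matrix.of fun i j : Fin s => mu (i + j)).det with hD
  have hD0 : D ≠ 0 := by
    intro h0
    have h1 := congrArg (evalRingHom y0) h0
    rw [hD, RingHom.map_det, map_zero] at h1
    refine hk_ne s _ hs (fun x => h x y0) (fun x hx => (Finset.mem_filter.1 hx).2) ?_
    refine Eq.trans ?_ h1
    congr 1
    ext i j
    simp only [Matrix.of_apply, RingHom.mapMatrix_apply, Matrix.map_apply, coe_evalRingHom]
    exact (hmu' y0 _).symm
  have hmult : ∀ y, s - (Finset.univ.filter fun x => h x y ≠ 0).card ≤ D.rootMultiplicity y := by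
    intro y
    rw [le_rootMultiplicity_iff hD0]
    exact hk_dvd s _ mu y _ rfl (fun x => h x y) (hmu' y)
  have hsum : ∑ y, D.rootMultiplicity y ≤ s * (s - 1) := by
    refine le_trans ?_ (hk_deg s mu hd)
    rw [← hD]
    refine le_trans ?_ (card_roots' D)
    simp only [← count_roots]
    rw [← Multiset.toFinset_sum_count_eq]
    refine le_of_eq (Finset.sum_subset (Finset.subset_univ _) fun y _ hy => ?_).symm
    rw [Multiset.mem_toFinset] at hy
    exact Multiset.count_eq_zero.2 hy
  calc Fintype.card F * s = ∑ y : F, s := by simp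
    _ ≤ ∑ y, ((Finset.univ.filter fun x => h x y ≠ 0).card + D.rootMultiplicity y) :=
      Finset.sum_le_sum fun y _ => by have := hmult y; omega
    _ ≤ _ := by rw [Finset.sum_add_distrib]; omega

open scoped Classical in
structure PLn (P L : Type) [Fintype P] [Fintype L] (I : P → L → Prop) (Q : ℕ) : Prop where
  pos : 0 < Q
  cardP : Fintype.card P = Q ^ 2 + Q + 1
  line : ∀ l, (Finset.univ.filter fun x => I x l).card = Q + 1
  uniq : ∀ x y, x ≠ y → (Finset.univ.filter fun l => I x l ∧ I y l).card = 1

namespace PLn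
open scoped Classical
open Finset
variable {P L : Type} [Fintype P] [Fintype L] {I : P → L → Prop} {Q : ℕ}

noncomputable def tc (I : P → L → Prop) (B : Finset P) (l : L) : ℕ := (B.filter fun x => I x l).card

theorem sum_pt (h : PLn P L I Q) (B : Finset P) (x : P) (d : ℕ)
    (hd : (univ.filter fun l => I x l).card = d) :
    ∑ l ∈ univ.filter (fun l => I x l), tc I B l + (if x ∈ B then 1 else 0) =
      B.card + (if x ∈ B then d else 0) := by
  have h1 : ∑ l ∈ univ.filter (fun l => I x l), tc I B l
      = ∑ y ∈ B, (univ.filter fun l => I x l ∧ I y l).card := by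
    simp only [tc, card_filter, sum_filter]
    rw [sum_comm]
    refine sum_congr rfl fun l _ => ?_
    by_cases hl : I x l <;> simp [hl]
  have h2 : ∀ y ∈ B, (univ.filter fun l => I x l ∧ I y l).card + (if x = y then 1 else 0)
      = 1 + (if x = y then d else 0) := by
    intro y _
    by_cases e : x = y
    · subst e; simp [hd]; omega
    · simp [e, h.uniq x y e]
  have h3 := sum_congr rfl h2
  rw [sum_add_distrib, sum_add_distrib, ← h1] at h3
  simpa using h3

theorem lines_pt (h : PLn P L I Q) (x : P) : (univ.filter fun l => I x l).card = Q + 1 := by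
  have h1 := h.sum_pt univ x _ rfl
  have h2 : ∑ l ∈ univ.filter (fun l => I x l), tc I univ l
      = (univ.filter fun l => I x l).card * (Q + 1) := by
    rw [← smul_eq_mul, ← sum_const]
    exact sum_congr rfl fun l _ => h.line l
  rw [h2, card_univ, h.cardP] at h1
  simp only [mem_univ, if_true] at h1
  have : (univ.filter fun l => I x l).card * Q = (Q + 1) * Q := by nlinarith
  exact Nat.eq_of_mul_eq_mul_right h.pos this

theorem sum_pt' (h : PLn P L I Q) (B : Finset P) (x : P) :
    ∑ l ∈ univ.filter (fun l => I x l), tc I B l = B.card + (if x ∈ B then Q else 0) := by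
  have := h.sum_pt B x _ (h.lines_pt x)
  split_ifs at * <;> omega

theorem sum1 (h : PLn P L I Q) (B : Finset P) : ∑ l, tc I B l = B.card * (Q + 1) := by
  have : ∑ l, tc I B l = ∑ x ∈ B, (univ.filter fun l => I x l).card := by
    simp only [tc, card_filter]; rw [sum_comm]
  rw [this, sum_congr rfl fun x _ => h.lines_pt x]; simp

theorem sum2 (h : PLn P L I Q) (B : Finset P) :
    ∑ l, tc I B l * tc I B l = B.card * (B.card + Q) := by
  have : ∑ l, tc I B l * tc I B l
      = ∑ x ∈ B, ∑ l ∈ univ.filter (fun l => I x l), tc I B l := by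
    simp only [sum_filter]
    rw [sum_comm]
    refine sum_congr rfl fun l _ => ?_
    rw [← sum_filter, sum_const, smul_eq_mul]; rfl
  rw [this, sum_congr rfl fun x _ => h.sum_pt' B x, sum_congr rfl fun x hx => by rw [if_pos hx]]
  simp

theorem cardL (h : PLn P L I Q) : Fintype.card L = Q ^ 2 + Q + 1 := by
  have h1 := h.sum1 univ
  have h2 : ∑ l, tc I univ l = Fintype.card L * (Q + 1) := by
    rw [← smul_eq_mul, ← card_univ, ← sum_const]
    exact sum_congr rfl fun l _ => h.line l
  rw [h2, card_univ, h.cardP] at h1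
  exact Nat.eq_of_mul_eq_mul_right (Nat.succ_pos _) h1

/-- the quadratic inequality when no line has a number of points strictly between a and b -/
theorem quad (h : PLn P L I Q) (B : Finset P) (a b : ℤ) (hab : a ≤ b)
    (ht : ∀ l, (tc I B l : ℤ) ≤ a ∨ b ≤ (tc I B l : ℤ)) :
    0 ≤ (B.card : ℤ) * (B.card + Q) - (a + b) * (B.card * (Q + 1)) + a * b * (Q ^ 2 + Q + 1) := by
  have h0 : 0 ≤ ∑ l, ((tc I B l : ℤ) - a) * ((tc I B l : ℤ) - b) := by
    refine sum_nonneg fun l _ => ?_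
    rcases ht l with h1 | h1
    · exact mul_nonneg_of_nonpos_of_nonpos (by linarith) (by linarith)
    · exact mul_nonneg (by linarith) (by linarith)
  have e : ∀ l, ((tc I B l : ℤ) - a) * ((tc I B l : ℤ) - b)
      = (tc I B l : ℤ) * (tc I B l : ℤ) - (a + b) * (tc I B l : ℤ) + a * b := fun l => by ring
  simp only [e, sum_add_distrib, sum_sub_distrib, ← mul_sum, sum_const, card_univ, h.cardL] at h0
  have e1 : ∑ l, (tc I B l : ℤ) = B.card * (Q + 1) := by exact_mod_cast h.sum1 B
  have e2 : ∑ l, (tc I B l : ℤ) * (tc I B l : ℤ) = B.card * (B.card + Q) := by exact_mod_cast h.sum2 B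
  rw [e1, e2] at h0
  simp only [nsmul_eq_mul] at h0
  push_cast at h0
  linarith

theorem two_lines (h : PLn P L I Q) {l m : L} (hlm : l ≠ m) :
    (univ.filter fun x => I x l ∧ I x m).card ≤ 1 := by
  rw [card_le_one]
  intro x hx y hy
  simp only [mem_filter, mem_univ, true_and] at hx hy
  by_contra hxy
  obtain ⟨k, hk⟩ := card_eq_one.1 (h.uniq x y hxy)
  have h1 : l ∈ ({k} : Finset L) := by rw [← hk]; simp [hx.1, hy.1]
  have h2 : m ∈ ({k} : Finset L) := by rw [← hk]; simp [hx.2, hy.2]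
  simp only [mem_singleton] at h1 h2
  exact hlm (h1.trans h2.symm)

/-- points on l lying on some line of K -/
theorem meet_card (h : PLn P L I Q) (K : Finset L) (l : L) (hl : l ∉ K) :
    (univ.filter fun x => I x l ∧ ∃ m ∈ K, I x m).card ≤ K.card := by
  have : (univ.filter fun x => I x l ∧ ∃ m ∈ K, I x m)
      ⊆ K.biUnion fun m => univ.filter fun x => I x l ∧ I x m := by
    intro x hx
    simp only [mem_filter, mem_univ, true_and, mem_biUnion] at *
    obtain ⟨h1, m, hm, h2⟩ := hx
    exact ⟨m, hm, h1, h2⟩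
  refine (card_le_card this).trans (card_biUnion_le.trans ?_)
  calc _ ≤ ∑ m ∈ K, 1 := sum_le_sum fun m hm => h.two_lines (l := l) (m := m) (by rintro rfl; exact hl hm)
    _ = K.card := by simp

/-- Bonferroni -/
theorem bonf (h : PLn P L I Q) (B : Finset P) (A : ℕ) (K : Finset L) (hK : ∀ l ∈ K, A ≤ tc I B l) :
    K.card * A ≤ (B.filter fun x => ∃ l ∈ K, I x l).card + K.card * K.card := by
  induction K using Finset.induction_on with
  | empty => simp
  | insert l K hl ih =>
    have ih' := ih fun m hm => hK m (mem_insert_of_mem hm)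
    have hA := hK l (mem_insert_self _ _)
    have hm := h.meet_card K l hl
    rw [card_insert_of_notMem hl]
    have e1 : (B.filter fun x => ∃ m ∈ insert l K, I x m)
        = (B.filter fun x => ∃ m ∈ K, I x m) ∪ (B.filter fun x => I x l ∧ ¬ ∃ m ∈ K, I x m) := by
      ext x
      simp only [mem_filter, mem_union, exists_mem_insert]
      generalize (∃ m ∈ K, I x m) = w
      tauto
    have e2 : Disjoint (B.filter fun x => ∃ m ∈ K, I x m) (B.filter fun x => I x l ∧ ¬ ∃ m ∈ K, I x m) := by
      rw [disjoint_left]; intro x hx hy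
      simp only [mem_filter] at hx hy; exact hy.2.2 hx.2
    rw [e1, card_union_of_disjoint e2]
    have e3 : tc I B l ≤ (B.filter fun x => I x l ∧ ¬ ∃ m ∈ K, I x m).card
        + (univ.filter fun x => I x l ∧ ∃ m ∈ K, I x m).card := by
      refine le_trans (card_le_card ?_) (card_union_le _ _)
      intro x hx
      simp only [mem_filter, mem_union, mem_univ, true_and] at *
      tauto
    nlinarith

noncomputable def spt {p : ℕ} (g : P → ZMod p) : Finset P := univ.filter fun x => g x ≠ 0

noncomputable def lind (I : P → L → Prop) (p : ℕ) (l : L) : P → ZMod p := fun x => if I x l then 1 else 0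

/-- A nonzero codeword of small weight has a long line. -/
theorem lemN (h : PLn P L I Q) {p q : ℕ} (hQ : Q = q ^ 2) (hq : 1 < q) (g : P → ZMod p)
    (SW : ∀ l, tc I (spt g) l * (Q + 1 - tc I (spt g) l) ≤ (spt g).card)
    (hw : (spt g).card < q * (Q + 1 - q)) (hg : ∃ x, g x ≠ 0) :
    ∃ l, Q + 1 - q < tc I (spt g) l := by
  by_contra hcon
  push Not at hcon
  obtain ⟨x, hx⟩ := hg
  have hxs : x ∈ spt g := by simp [spt, hx]
  have hs := h.sum_pt' (spt g) x
  rw [if_pos hxs] at hs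
  have hne : (univ.filter fun l => I x l).Nonempty := by
    rw [← card_pos, h.lines_pt]; omega
  obtain ⟨l0, -, hmax⟩ := exists_max_image _ (fun l => tc I (spt g) l) hne
  have hle : ∑ l ∈ univ.filter (fun l => I x l), tc I (spt g) l ≤ (Q + 1) * tc I (spt g) l0 := by
    rw [← h.lines_pt x, ← smul_eq_mul, ← sum_const]
    exact sum_le_sum hmax
  have hSW := SW l0
  have hc := hcon l0
  set t := tc I (spt g) l0
  have hqQ : q ≤ Q := by nlinarith
  obtain ⟨u, hu⟩ : ∃ u, Q + 1 - t = u := ⟨_, rfl⟩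
  have hu' : u + t = Q + 1 := by omega
  obtain ⟨u2, hu2⟩ : ∃ u, Q + 1 - q = u := ⟨_, rfl⟩
  have hu2' : u2 + q = Q + 1 := by omega
  rw [hu] at hSW
  rw [hu2] at hw hc
  by_cases htq : q ≤ t
  · obtain ⟨a, ha⟩ : ∃ a, t = q + a := ⟨t - q, by omega⟩
    obtain ⟨b, hb⟩ : ∃ b, u2 = t + b := ⟨u2 - t, by omega⟩
    have : u = q + b := by omega
    subst this
    nlinarith
  · have : t * t + 1 ≤ q ^ 2 := by nlinarith
    nlinarith

end PLn

namespace PLn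
open scoped Classical
open Finset
variable {P L : Type} [Fintype P] [Fintype L] {I : P → L → Prop} {Q : ℕ}

noncomputable def gg (I : P → L → Prop) (p : ℕ) (B : Finset P) (K : Finset L) : P → ZMod p :=
  fun x => (if x ∈ B then 1 else 0) - ((K.filter fun l => I x l).card : ZMod p)

theorem mem_spt {p : ℕ} (g : P → ZMod p) (x : P) : x ∈ spt g ↔ g x ≠ 0 := by simp [spt]

theorem gg_mem {p : ℕ} (C : Submodule (ZMod p) (P → ZMod p)) (hC : ∀ l, lind I p l ∈ C)
    (B : Finset P) (hB : (fun x => if x ∈ B then (1 : ZMod p) else 0) ∈ C) (K : Finset L) :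
    gg I p B K ∈ C := by
  have : gg I p B K = (fun x => if x ∈ B then (1 : ZMod p) else 0) - ∑ l ∈ K, lind I p l := by
    ext x
    simp [gg, lind, Finset.sum_apply]
  rw [this]
  exact C.sub_mem hB (C.sum_mem fun l _ => hC l)

/-- number of points of a line outside B -/
theorem out_card (h : PLn P L I Q) (B : Finset P) (l : L) :
    (univ.filter fun x => I x l ∧ x ∉ B).card + tc I B l = Q + 1 := by
  rw [← h.line l, tc, ← card_union_of_disjoint]
  · congr 1; ext x; simp only [mem_union, mem_filter, mem_univ, true_and]; tauto
  · rw [disjoint_left]; intro x hx hy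
    simp only [mem_filter, mem_univ, true_and] at hx hy; exact hx.2 hy.1

theorem gg_step (h : PLn P L I Q) {p q : ℕ} (hQ : Q = q ^ 2) (hq : 6 ≤ q)
    (B : Finset P) (K : Finset L) (l : L) (hl : l ∉ K) (hK : K.card ≤ 2 * q)
    (hbig : Q + 1 ≤ tc I B l + q) :
    (spt (gg I p B (insert l K))).card ≤ (spt (gg I p B K)).card := by
  set G := B.filter (fun x => I x l ∧ ¬ ∃ m ∈ K, I x m) with hG
  set Bad := (univ.filter fun x => I x l ∧ x ∉ B) ∪ (univ.filter fun x => I x l ∧ ∃ m ∈ K, I x m) with hBad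
  have hm := h.meet_card K l hl
  have ho := h.out_card B l
  have hBadc : Bad.card ≤ q + 2 * q := by
    refine (card_union_le _ _).trans ?_
    omega
  have hGc : tc I B l ≤ G.card + 2 * q := by
    have e3 : tc I B l ≤ G.card + (univ.filter fun x => I x l ∧ ∃ m ∈ K, I x m).card := by
      refine le_trans (card_le_card ?_) (card_union_le _ _)
      intro x hx
      simp only [hG, mem_filter, mem_union, mem_univ, true_and] at *
      tauto
    omega
  by_cases hp1 : p = 1
  · subst hp1
    have : spt (gg I 1 B (insert l K)) = ∅ := by
      ext x; simp only [spt, mem_filter, mem_univ, true_and, notMem_empty, iff_false, not_not]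
      exact Subsingleton.elim _ _
    simp [this]
  have hz : (1 : ZMod p) ≠ 0 := by
    intro h0
    have : (p : ℕ) ∣ 1 := by
      rw [← ZMod.natCast_eq_zero_iff]; simpa using h0
    exact hp1 (Nat.dvd_one.1 this)
  have hGsub : G ⊆ spt (gg I p B K) := by
    intro x hx
    simp only [hG, mem_filter, not_exists, not_and] at hx
    have : K.filter (fun l => I x l) = ∅ := by
      rw [filter_eq_empty_iff]; intro m hm; exact hx.2.2 m hm
    simp [mem_spt, gg, hx.1, this, hz]
  have hsub : spt (gg I p B (insert l K)) ⊆ (spt (gg I p B K) \ G) ∪ Bad := by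
    intro x hx
    by_cases hxl : I x l
    · by_cases hxb : x ∈ Bad
      · exact mem_union_right _ hxb
      · exfalso
        simp only [hBad, mem_union, mem_filter, mem_univ, true_and, not_or, not_and, not_not,
          not_exists] at hxb
        have h1 := hxb.1 hxl
        have h2 := hxb.2 hxl
        have h3 : K.filter (fun l => I x l) = ∅ := by
          rw [filter_eq_empty_iff]; intro m hm; exact h2 m hm
        simp [mem_spt, gg, filter_insert, hxl, h1, h3] at hx
    · refine mem_union_left _ ?_
      rw [mem_sdiff]
      constructor
      · simpa [mem_spt, gg, filter_insert, hxl] using hx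
      · simp [hG, hxl]
  have c1 := card_le_card hsub
  have c2 := card_union_le (spt (gg I p B K) \ G) Bad
  have c3 := card_sdiff_add_card_eq_card hGsub
  nlinarith

theorem lem3_k (h : PLn P L I Q) {p q : ℕ} (hp : 5 ≤ p) (hq : q = p ^ 2) (hQ : Q = q ^ 2)
    (B : Finset P) (hm : B.card ≤ q ^ 3 + Q + 1) :
    (univ.filter fun l => Q + 1 ≤ tc I B l + q).card + 2 * p ≤ 2 * q := by
  by_contra hcon
  push Not at hcon
  have hpq : 2 * p ≤ 2 * q := by rw [hq]; nlinarith
  obtain ⟨K, hK, hKc⟩ := exists_subset_card_eq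
    (show 2 * q - 2 * p + 1 ≤ (univ.filter fun l => Q + 1 ≤ tc I B l + q).card by omega)
  have hb := h.bonf B (Q + 1 - q) K (fun l hl => by
    have := (mem_filter.1 (hK hl)).2; omega)
  have hb2 := card_filter_le B (fun x => ∃ l ∈ K, I x l)
  have hqQ : q ≤ Q + 1 := by rw [hQ]; nlinarith
  have hkz : (K.card : ℤ) = 2 * p ^ 2 - 2 * p + 1 := by
    have : K.card + 2 * p = 2 * q + 1 := by omega
    rw [hq] at this
    have : (K.card : ℤ) + 2 * p = 2 * p ^ 2 + 1 := by exact_mod_cast this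
    linarith
  have hAz : ((Q + 1 - q : ℕ) : ℤ) = p ^ 4 + 1 - p ^ 2 := by
    rw [Nat.cast_sub hqQ, hQ, hq]; push_cast; ring
  have hbz : (K.card : ℤ) * ((Q + 1 - q : ℕ) : ℤ) ≤ p ^ 6 + p ^ 4 + 1 + (K.card : ℤ) * K.card := by
    have h1 : K.card * (Q + 1 - q) ≤ q ^ 3 + Q + 1 + K.card * K.card := by omega
    rw [hQ, hq] at h1
    rw [hQ, hq]
    have h2 := (Nat.cast_le (α := ℤ)).2 h1
    push_cast at h2 ⊢
    linarith
  rw [hkz, hAz] at hbz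
  obtain ⟨x, rfl⟩ := Nat.exists_eq_add_of_le hp
  push_cast at hbz
  have hx : (0 : ℤ) ≤ x := by positivity
  ring_nf at hbz
  nlinarith [pow_nonneg hx 2, pow_nonneg hx 3, pow_nonneg hx 4, pow_nonneg hx 5, pow_nonneg hx 6]

/-- existence of a point of l0 outside B on few long lines -/
theorem lem3_pt (h : PLn P L I Q) (B : Finset P) (l0 : L) (K : Finset L) (hl0 : l0 ∉ K) (e a : ℕ)
    (he : tc I B l0 + e = Q + 1) (hK : K.card < e * a) :
    ∃ x, I x l0 ∧ x ∉ B ∧ (K.filter fun l => I x l).card < a := by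
  by_contra hcon
  push Not at hcon
  have ho := h.out_card B l0
  have hoe : (univ.filter fun x => I x l0 ∧ x ∉ B).card = e := by omega
  have h1 : e * a ≤ ∑ x ∈ univ.filter (fun x => I x l0 ∧ x ∉ B), (K.filter fun l => I x l).card := by
    rw [← hoe, ← smul_eq_mul, ← sum_const]
    refine sum_le_sum fun x hx => ?_
    simp only [mem_filter, mem_univ, true_and] at hx
    exact hcon x hx.1 hx.2
  have h2 : ∑ x ∈ univ.filter (fun x => I x l0 ∧ x ∉ B), (K.filter fun l => I x l).card
      = ∑ l ∈ K, ((univ.filter (fun x => I x l0 ∧ x ∉ B)).filter fun x => I x l).card := by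
    simp only [card_filter (p := fun l => I _ l), card_filter (p := fun x => I x _)]
    rw [sum_comm]
  have h3 : ∑ l ∈ K, ((univ.filter (fun x => I x l0 ∧ x ∉ B)).filter fun x => I x l).card
      ≤ ∑ l ∈ K, 1 := by
    refine sum_le_sum fun l hl => ?_
    refine le_trans (card_le_card ?_) (h.two_lines (l := l0) (m := l) (by rintro rfl; exact hl0 hl))
    intro x hx
    simp only [mem_filter, mem_univ, true_and] at *
    exact ⟨hx.1.1, hx.2⟩
  simp at h3
  omega

theorem wt_single (B : Finset P) {p : ℕ} (hp : 1 < p) (l0 : L) (h : PLn P L I Q) (e : ℕ)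
    (he : tc I B l0 + e = Q + 1) :
    (spt (gg I p B {l0})).card + tc I B l0 = B.card + e := by
  have : Fact (1 < p) := ⟨hp⟩
  have ho := h.out_card B l0
  have e1 : spt (gg I p B {l0}) = (B.filter fun x => ¬ I x l0) ∪ (univ.filter fun x => I x l0 ∧ x ∉ B) := by
    ext x
    by_cases h1 : x ∈ B <;> by_cases h2 : I x l0 <;> simp [mem_spt, gg, filter_singleton, h1, h2]
  rw [e1, card_union_of_disjoint]
  · have := card_filter_add_card_filter_not (s := B) (fun x => I x l0)
    unfold tc at *
    omega
  · rw [disjoint_left]; intro x hx hy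
    simp only [mem_filter, mem_univ, true_and] at hx hy; exact hy.2 hx.1

theorem tc_single (B : Finset P) {p : ℕ} (hp : 1 < p) (l0 l : L) (h : PLn P L I Q) (hl : l ≠ l0)
    (x : P) (hx : I x l0) (hxl : I x l) (hxB : x ∉ B) :
    tc I (spt (gg I p B {l0})) l = tc I B l + 1 := by
  have : Fact (1 < p) := ⟨hp⟩
  unfold tc
  have e1 : (spt (gg I p B {l0})).filter (fun x => I x l) = insert x (B.filter fun x => I x l) := by
    ext y
    simp only [mem_filter, mem_insert]
    by_cases hy : I y l
    · by_cases hyx : y = x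
      · subst hyx; simp [mem_spt, gg, filter_singleton, hx, hxl, hxB]
      · have : ¬ I y l0 := by
          intro hy0
          exact hyx (card_le_one.1 (h.two_lines hl) y (by simp [hy, hy0]) x (by simp [hx, hxl]))
        by_cases hyB : y ∈ B <;> simp [mem_spt, gg, filter_singleton, this, hyB, hy, hyx]
    · have : y ≠ x := by rintro rfl; exact hy hxl
      simp [hy, this]
  rw [e1, card_insert_of_notMem (by simp [hxB])]

set_option maxHeartbeats 1000000 in
theorem lem3 (h : PLn P L I Q) {p q : ℕ} (hp : 5 ≤ p) (hq : q = p ^ 2) (hQ : Q = q ^ 2)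
    (C : Submodule (ZMod p) (P → ZMod p)) (hC : ∀ l, lind I p l ∈ C)
    (SW : ∀ g ∈ C, ∀ l, tc I (spt g) l * (Q + 1 - tc I (spt g) l) ≤ (spt g).card)
    (B : Finset P) (hB : (fun x => if x ∈ B then (1 : ZMod p) else 0) ∈ C)
    (h1 : ∀ l, tc I B l % p = 1)
    (hgap : ∀ l, tc I B l ≤ q + 1 ∨ Q + 1 ≤ tc I B l + q)
    (l0 : L) (e : ℕ) (he : tc I B l0 + e = Q + 1) (h2p : 2 * p ≤ e) (heq : e ≤ q)
    (hm : B.card ≤ q ^ 3 + tc I B l0) : False := by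
  set Big := univ.filter (fun l => Q + 1 ≤ tc I B l + q) with hBig
  have hk : Big.card + 2 * p ≤ 2 * q := h.lem3_k hp hq hQ B (by omega)
  have hl0 : l0 ∈ Big := by simp [hBig]; omega
  have hq25 : 25 ≤ q := by rw [hq]; nlinarith
  have hcE : (Big.erase l0).card + 1 = Big.card := card_erase_add_one hl0
  obtain ⟨x, hx0, hxB, hxj⟩ := h.lem3_pt B l0 (Big.erase l0) (by simp) e (p - 1) he (by
    have : 2 * p * (p - 1) ≤ e * (p - 1) := Nat.mul_le_mul_right _ h2p
    have h3 : 2 * p * (p - 1) + 2 * p = 2 * q := by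
      obtain ⟨a, rfl⟩ : ∃ a, p = a + 1 := ⟨p - 1, by omega⟩
      rw [hq]; simp; ring
    omega)
  have hw0 := wt_single B (p := p) (by omega) l0 h e he
  -- short lines through x are very short
  have hshort : ∀ l, I x l → l ≠ l0 → l ∉ Big → tc I B l + p ≤ q + 1 := by
    intro l hxl hl hlB
    have hle : tc I B l ≤ q + 1 := by
      rcases hgap l with h2 | h2
      · exact h2
      · exact absurd (show l ∈ Big from mem_filter.2 ⟨mem_univ l, h2⟩) hlB
    by_contra hlt
    have hm1 := h1 l
    have heq1 : tc I B l = q + 1 := by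
      have e1 := Nat.div_add_mod (tc I B l) p
      rw [hm1] at e1
      rw [hq] at hle hlt ⊢
      set d := tc I B l / p
      rw [← e1] at hle hlt ⊢
      have h3 : d ≤ p := by
        by_contra h4
        have : p * (p + 1) ≤ p * d := Nat.mul_le_mul_left _ (by omega)
        nlinarith
      have h4 : p ≤ d := by
        by_contra h4
        have : p * (d + 1) ≤ p * p := Nat.mul_le_mul_left _ (by omega)
        nlinarith
      have : d = p := le_antisymm h3 h4
      rw [this]; ring
    have h5 := SW _ (gg_mem C hC B hB {l0}) l
    rw [tc_single B (by omega) l0 l h hl x hx0 hxl hxB, heq1] at h5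
    have h6 : (spt (gg I p B {l0})).card ≤ q ^ 3 + q := by omega
    have h7 : Q + 1 - (q + 1 + 1) + (q + 1) = q ^ 2 := by
      rw [hQ]
      have : q + 1 ≤ q ^ 2 := by nlinarith
      omega
    set u := Q + 1 - (q + 1 + 1)
    nlinarith
  -- counting through x
  have hsum := h.sum_pt' B x
  rw [if_neg hxB, add_zero] at hsum
  have hl0x : l0 ∈ univ.filter (fun l => I x l) := by simp [hx0]
  rw [← add_sum_erase _ _ hl0x] at hsum
  have hbound : ∑ l ∈ (univ.filter fun l => I x l).erase l0, tc I B l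
      ≤ ∑ l ∈ (univ.filter fun l => I x l).erase l0, ((q + 1 - p) + if l ∈ Big then (Q + p - q) else 0) := by
    refine sum_le_sum fun l hl => ?_
    simp only [mem_erase, mem_filter, mem_univ, true_and] at hl
    have hQ1 : tc I B l ≤ Q + 1 := by have := h.out_card B l; omega
    split_ifs with hb
    · have : p ≤ q := by rw [hq]; nlinarith
      omega
    · have := hshort l hl.2 hl.1 hb
      omega
  have hcount : ∑ l ∈ (univ.filter fun l => I x l).erase l0, ((q + 1 - p) + if l ∈ Big then (Q + p - q) else 0)
      = Q * (q + 1 - p) + ((Big.erase l0).filter fun l => I x l).card * (Q + p - q) := by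
    rw [sum_add_distrib, sum_const, card_erase_of_mem hl0x, h.lines_pt, ← sum_filter, sum_const]
    simp only [smul_eq_mul, Nat.add_sub_cancel]
    congr 3
    ext l
    simp only [mem_filter, mem_erase, mem_univ, true_and]
    tauto
  have hw1 : (spt (gg I p B {l0})).card < q * (Q + 1 - q) := by
    have hj : ((Big.erase l0).filter fun l => I x l).card + 2 ≤ p := by omega
    have hmul : ((Big.erase l0).filter fun l => I x l).card * (Q + p - q) ≤ (p - 2) * (Q + p - q) :=
      Nat.mul_le_mul_right _ (by omega)
    have hW : (spt (gg I p B {l0})).card ≤ Q * (q + 1 - p) + (p - 2) * (Q + p - q) + q := by omega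
    have hpq : p ≤ q + 1 := by rw [hq]; nlinarith
    have hqQ : q ≤ Q := by rw [hQ]; nlinarith
    have hz : ((Q * (q + 1 - p) + (p - 2) * (Q + p - q) + q : ℕ) : ℤ) < ((q * (Q + 1 - q) : ℕ) : ℤ) := by
      push_cast [Nat.cast_sub hpq, Nat.cast_sub (show q ≤ Q + p by omega),
        Nat.cast_sub (show q ≤ Q + 1 by omega), Nat.cast_sub (show 2 ≤ p by omega)]
      rw [hQ]; push_cast
      have hp' : (5 : ℤ) ≤ p := by exact_mod_cast hp
      have hlt : (0 : ℤ) < (p - 2) * (q - p) := by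
        have : (p : ℤ) < q := by rw [hq]; push_cast; nlinarith
        exact mul_pos (by linarith) (by linarith)
      have e2 : (q : ℤ) ^ 2 * (q + 1 - p) + (p - 2) * (q ^ 2 + p - q) + q
          = q * (q ^ 2 + 1 - q) - (p - 2) * (q - p) := by ring
      linarith
    have : Q * (q + 1 - p) + (p - 2) * (Q + p - q) + q < q * (Q + 1 - q) := by exact_mod_cast hz
    omega
  -- subtract all long lines
  have hmono : ∀ K : Finset L, K ⊆ Big.erase l0 →
      (spt (gg I p B (insert l0 K))).card ≤ (spt (gg I p B {l0})).card := by
    intro K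
    induction K using Finset.induction_on with
    | empty => intro _; simp
    | insert l K hl ih =>
      intro hsub
      have hKs : K ⊆ Big.erase l0 := fun m hm => hsub (mem_insert_of_mem hm)
      have hlb := hsub (mem_insert_self l K)
      rw [mem_erase] at hlb
      refine le_trans ?_ (ih hKs)
      rw [Finset.insert_comm]
      refine gg_step h hQ (by omega) B _ l ?_ ?_ ?_
      · simp [hl, hlb.1]
      · have := card_le_card hKs
        have := card_insert_le l0 K
        omega
      · simpa [hBig] using hlb.2
  have hfin := hmono _ (Subset.refl _)
  rw [insert_erase hl0] at hfin
  obtain ⟨l, hl⟩ := h.lemN hQ (by omega) (gg I p B Big) (SW _ (gg_mem C hC B hB Big))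
    (lt_of_le_of_lt hfin hw1) ⟨x, by
      have e1 : (Big.filter fun l => I x l) = insert l0 ((Big.erase l0).filter fun l => I x l) := by
        conv_lhs => rw [← insert_erase hl0, filter_insert, if_pos hx0]
      simp only [gg, if_neg hxB, zero_sub, neg_ne_zero]
      rw [e1, card_insert_of_notMem (by simp), Ne, ZMod.natCast_eq_zero_iff]
      intro hdvd
      have := Nat.le_of_dvd (by omega) hdvd
      omega⟩
  have hup : tc I (spt (gg I p B Big)) l ≤ 3 * q + 1 := by
    by_cases hlB : l ∈ Big
    · have hsub : (spt (gg I p B Big)).filter (fun y => I y l) ⊆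
          (univ.filter fun y => I y l ∧ y ∉ B) ∪
          (univ.filter fun y => I y l ∧ ∃ m ∈ Big.erase l, I y m) := by
        intro y hy
        rw [mem_filter] at hy
        by_contra hcon
        simp only [mem_union, mem_filter, mem_univ, true_and, not_or, not_and, not_not, not_exists] at hcon
        have a1 := hcon.1 hy.2
        have a2 := hcon.2 hy.2
        have a3 : (Big.filter fun l => I y l) = {l} := by
          ext m
          simp only [mem_filter, mem_singleton]
          constructor
          · intro hm
            by_contra hne
            exact a2 m (mem_erase.2 ⟨hne, hm.1⟩) hm.2
          · rintro rfl; exact ⟨hlB, hy.2⟩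
        have := hy.1
        simp [mem_spt, gg, a1, a3] at this
      have a4 := card_le_card hsub
      have a5 := card_union_le (univ.filter fun y => I y l ∧ y ∉ B)
          (univ.filter fun y => I y l ∧ ∃ m ∈ Big.erase l, I y m)
      have a6 := h.meet_card (Big.erase l) l (by simp)
      have a7 := h.out_card B l
      have a8 := card_erase_add_one hlB
      have a9 : Q + 1 ≤ tc I B l + q := by simpa [hBig] using hlB
      unfold tc at *
      omega
    · have hsub : (spt (gg I p B Big)).filter (fun y => I y l) ⊆
          (B.filter fun y => I y l) ∪ (univ.filter fun y => I y l ∧ ∃ m ∈ Big, I y m) := by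
        intro y hy
        rw [mem_filter] at hy
        by_contra hcon
        simp only [mem_union, mem_filter, mem_univ, true_and, not_or, not_and, not_exists] at hcon
        have a1 : y ∉ B := fun hb => hcon.1 hb hy.2
        have a2 := hcon.2 hy.2
        have a3 : (Big.filter fun l => I y l) = ∅ := by
          rw [filter_eq_empty_iff]; exact fun m hm => a2 m hm
        have := hy.1
        simp [mem_spt, gg, a1, a3] at this
      have a4 := card_le_card hsub
      have a5 := card_union_le (B.filter fun y => I y l) (univ.filter fun y => I y l ∧ ∃ m ∈ Big, I y m)
      have a6 := h.meet_card Big l hlB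
      have a7 : tc I B l ≤ q + 1 := by
        rcases hgap l with h2 | h2
        · exact h2
        · exact absurd (show l ∈ Big from mem_filter.2 ⟨mem_univ l, h2⟩) hlB
      unfold tc at *
      omega
  have : q * q = Q := by rw [hQ]; ring
  have : 25 * q ≤ q * q := Nat.mul_le_mul_right _ hq25
  omega

end PLn

namespace QH
open scoped Classical
open Finset
variable {F : Type} [Field F] [Fintype F] {n : ℕ}

instance : Finite (ProjPoint F n) := by unfold ProjPoint; infer_instance
noncomputable instance : Fintype (ProjPoint F n) := Fintype.ofFinite _

theorem pts_card (W : Submodule F (Fin n → F)) :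
    (pointsIn F n W).ncard * (Fintype.card F - 1) + 1 = Fintype.card F ^ finrank F W := by
  have h1 := Projectivization.card' F W
  have e : {H : Submodule F W // finrank F H = 1} ≃ pointsIn F n W :=
    { toFun := fun H => ⟨⟨H.1.map W.subtype, by
          rw [Submodule.finrank_map_subtype_eq]; exact H.2⟩, Submodule.map_subtype_le _ _⟩
      invFun := fun P => ⟨P.1.1.comap W.subtype, by
          rw [← Submodule.finrank_map_subtype_eq, Submodule.map_comap_subtype,
            inf_eq_right.2 P.2]; exact P.1.2⟩
      left_inv := fun H => by
        apply Subtype.ext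
        exact Submodule.comap_map_eq_of_injective W.injective_subtype _
      right_inv := fun P => by
        apply Subtype.ext; apply Subtype.ext
        show Submodule.map W.subtype (Submodule.comap W.subtype P.1.1) = P.1.1
        rw [Submodule.map_comap_subtype, inf_eq_right.2 P.2] }
  rw [Nat.card_congr ((Projectivization.equivSubmodule F W).trans e), Nat.card_coe_set_eq] at h1
  rw [Nat.card_eq_fintype_card (α := F)] at h1
  rw [← h1, ← Nat.card_eq_fintype_card (α := F)]
  exact Module.natCard_eq_pow_finrank

theorem pts_mod (p : ℕ) (hpF : p ∣ Fintype.card F) (W : Submodule F (Fin n → F)) (hW : 1 ≤ finrank F W) :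
    ((pointsIn F n W).ncard : ZMod p) = 1 := by
  have h := congrArg (Nat.cast : ℕ → ZMod p) (pts_card W)
  have h0 : ((Fintype.card F : ℕ) : ZMod p) = 0 := (ZMod.natCast_eq_zero_iff _ _).2 hpF
  push_cast [Nat.cast_sub (Fintype.card_pos (α := F))] at h
  rw [h0, zero_pow (by omega)] at h
  linear_combination -h

theorem pts_two (W : Submodule F (Fin n → F)) (hW : finrank F W = 2) :
    (pointsIn F n W).ncard = Fintype.card F + 1 := by
  have h := pts_card W
  have h2 : 1 < Fintype.card F := Fintype.one_lt_card
  obtain ⟨k, hk⟩ : ∃ k, Fintype.card F = k + 2 := ⟨_, (Nat.sub_add_cancel h2).symm⟩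
  rw [hW, hk] at h; rw [hk]
  simp only [show k + 2 - 1 = k+1 by omega] at h
  have : 0 < k + 1 := by omega
  nlinarith
theorem pts_three (W : Submodule F (Fin n → F)) (hW : finrank F W = 3) :
    (pointsIn F n W).ncard = Fintype.card F ^ 2 + Fintype.card F + 1 := by
  have h := pts_card W
  have h2 : 1 < Fintype.card F := Fintype.one_lt_card
  obtain ⟨k, hk⟩ : ∃ k, Fintype.card F = k + 2 := ⟨_, (Nat.sub_add_cancel h2).symm⟩
  rw [hW, hk] at h; rw [hk]
  simp only [show k + 2 - 1 = k+1 by omega] at h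
  have : 0 < k + 1 := by omega
  apply Nat.eq_of_mul_eq_mul_right this
  nlinarith

theorem ncard_eq (V : Set (ProjPoint F n)) : V.ncard = (univ.filter fun P => P ∈ V).card := by
  rw [← Set.ncard_coe_finset]; congr 1; ext; simp

theorem secant_eq (V : Set (ProjPoint F n)) (W : Submodule F (Fin n → F)) :
    secant F n V W = (univ.filter fun P : ProjPoint F n => P ∈ V ∧ P.1 ≤ W).card := by
  rw [secant, ncard_eq]; congr 1; ext P; simp [pointsIn]

theorem code_sum (p : ℕ) (hpF : p ∣ Fintype.card F) (c : ProjPoint F n → ZMod p)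
    (hc : c ∈ hypCode F p n) (W W' : Submodule F (Fin n → F)) (hW : 2 ≤ finrank F W)
    (hW' : 2 ≤ finrank F W') :
    ∑ P, (if P.1 ≤ W then c P else 0) = ∑ P, (if P.1 ≤ W' then c P else 0) := by
  refine Submodule.span_induction (p := fun c _ => ∑ P, (if P.1 ≤ W then c P else 0) = ∑ P, (if P.1 ≤ W' then c P else 0)) ?_ ?_ ?_ ?_ hc
  · rintro _ ⟨H, hH, rfl⟩
    have key : ∀ W : Submodule F (Fin n → F), 2 ≤ finrank F W →
        ∑ P : ProjPoint F n, (if P.1 ≤ W then charVec F p n (pointsIn F n H) P else 0) = 1 := by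
      intro W hW
      have h1 : 1 ≤ finrank F (W ⊓ H : Submodule F (Fin n → F)) := by
        have := Submodule.finrank_sup_add_finrank_inf_eq W H
        have h3 := Submodule.finrank_le (W ⊔ H)
        rw [finrank_fin_fun] at h3
        omega
      rw [← pts_mod p hpF _ h1, ncard_eq, card_filter]
      push_cast
      refine sum_congr rfl fun P _ => ?_
      by_cases h1 : P.1 ≤ W <;> by_cases h2 : P.1 ≤ H <;> simp [charVec, Set.indicator, pointsIn, h1, h2]
    rw [key W hW, key W' hW']
  · simp
  · intro x y _ _ hx hy
    simp only [Pi.add_apply]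
    have (W : Submodule F (Fin n → F)) : ∑ P : ProjPoint F n, (if P.1 ≤ W then x P + y P else 0) =
      ∑ P : ProjPoint F n, (if P.1 ≤ W then x P else 0) + ∑ P : ProjPoint F n, (if P.1 ≤ W then y P else 0) := by
      rw [← sum_add_distrib]; refine sum_congr rfl fun P _ => ?_; split_ifs <;> simp
    rw [this, this, hx, hy]
  · intro a x _ hx
    simp only [Pi.smul_apply]
    have (W : Submodule F (Fin n → F)) : ∑ P : ProjPoint F n, (if P.1 ≤ W then a • x P else 0) =
      a • ∑ P : ProjPoint F n, (if P.1 ≤ W then x P else 0) := by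
      rw [smul_sum]; refine sum_congr rfl fun P _ => ?_; split_ifs <;> simp
    rw [this, this, hx]

theorem secant_mod (p : ℕ) (hpF : p ∣ Fintype.card F) (V : Set (ProjPoint F n))
    (hc : charVec F p n V ∈ hypCode F p n) (hV : (V.ncard : ZMod p) = 1) 
    (W : Submodule F (Fin n → F)) (hW : 2 ≤ finrank F W) :
    (secant F n V W : ZMod p) = 1 := by
  have h2 : 2 ≤ finrank F (⊤ : Submodule F (Fin n → F)) :=
    hW.trans (Submodule.finrank_mono le_top)
  have key : ∀ W, (secant F n V W : ZMod p) = ∑ P, (if P.1 ≤ W then charVec F p n V P else 0) := by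
    intro W
    rw [secant_eq, card_filter]; push_cast
    refine sum_congr rfl fun P _ => ?_
    simp only [charVec, Set.indicator, Pi.one_apply, ite_and]; split_ifs <;> rfl
  rw [key, code_sum p hpF _ hc W ⊤ hW h2, ← key, ← hV]
  have : V ∩ pointsIn F n ⊤ = V := by ext; simp [pointsIn]
  rw [secant, this]

theorem V_mod (p r : ℕ) (hr : 1 ≤ r) (hp : p.Prime) (V : Set (ProjPoint F (r+1))) (h : IsQuasiHermitian F (p^2) r V) :
    (V.ncard : ZMod p) = 1 := by
  have h := congrArg (Int.cast : ℤ → ZMod p) h.1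
  push_cast at h
  rw [CharP.cast_eq_zero (ZMod p) p] at h
  have e : ((-1 : ZMod p)^r)^2 = 1 := by rw [← pow_mul, mul_comm, pow_mul]; simp
  have z : (0 : ZMod p)^2 = 0 := by simp
  rw [z, zero_pow (by omega : r+1 ≠ 0), zero_pow (by omega : r ≠ 0), z] at h
  linear_combination e - h
end QH

namespace QH
open scoped Classical
open Finset
variable {F : Type} [Field F] [Fintype F] {n : ℕ}

abbrev PP (π : Submodule F (Fin n → F)) : Type := {x : ProjPoint F n // x.1 ≤ π}
abbrev LL (π : Submodule F (Fin n → F)) : Type := {l : Submodule F (Fin n → F) // l ≤ π ∧ finrank F l = 2}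
def II (π : Submodule F (Fin n → F)) (x : PP π) (l : LL π) : Prop := x.1.1 ≤ l.1
noncomputable instance (π : Submodule F (Fin n → F)) : Fintype (PP π) := Fintype.ofFinite _
noncomputable instance (π : Submodule F (Fin n → F)) : Fintype (LL π) := Fintype.ofFinite _

theorem pp_card (π W : Submodule F (Fin n → F)) (hW : W ≤ π) (V : Set (ProjPoint F n)) :
    (univ.filter fun x : PP π => x.1 ∈ V ∧ x.1.1 ≤ W).card = secant F n V W := by
  rw [secant_eq, ← card_map (⟨Subtype.val, Subtype.val_injective⟩ : PP π ↪ ProjPoint F n)]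
  congr 1
  ext x
  simp only [mem_map, mem_filter, mem_univ, true_and, Function.Embedding.coeFn_mk]
  constructor
  · rintro ⟨a, h, rfl⟩; exact h
  · intro h; exact ⟨⟨x, h.2.trans hW⟩, h, rfl⟩

theorem sec_univ (W : Submodule F (Fin n → F)) : secant F n Set.univ W = (pointsIn F n W).ncard := by
  rw [secant, Set.univ_inter]

theorem pt_eq_of_le {x y : ProjPoint F n} (h : x.1 ≤ y.1) : x = y := 
  Subtype.ext (Submodule.eq_of_le_of_finrank_eq h (x.2.trans y.2.symm))

theorem sup_two {x y : ProjPoint F n} (h : x ≠ y) : finrank F (x.1 ⊔ y.1 : Submodule F (Fin n → F)) = 2 := by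
  have h1 := Submodule.finrank_sup_add_finrank_inf_eq x.1 y.1
  rw [x.2, y.2] at h1
  have : finrank F (x.1 ⊓ y.1 : Submodule F (Fin n → F)) = 0 := by
    by_contra h0
    have h2 : (x.1 ⊓ y.1 : Submodule F (Fin n → F)) = x.1 := by
      apply Submodule.eq_of_le_of_finrank_le inf_le_left
      rw [x.2]; omega
    exact h (pt_eq_of_le (inf_eq_left.1 h2))
  omega

theorem plane (π : Submodule F (Fin n → F)) (hπ : finrank F π = 3) :
    PLn (PP π) (LL π) (II π) (Fintype.card F) where
  pos := Fintype.card_pos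
  cardP := by
    rw [← pts_three π hπ, ← sec_univ, ← pp_card π π le_rfl, ← card_univ]
    congr 1; ext x; simp [x.2]
  line := fun l => by
    rw [← pts_two l.1 l.2.2, ← sec_univ, ← pp_card π l.1 l.2.1]
    congr 1; ext x; simp only [mem_filter, mem_univ, true_and, Set.mem_univ]; rfl
  uniq := fun x y hxy => by
    have hxy' : x.1 ≠ y.1 := fun h => hxy (Subtype.ext h)
    rw [card_eq_one]
    refine ⟨⟨x.1.1 ⊔ y.1.1, sup_le x.2 y.2, sup_two hxy'⟩, ?_⟩
    ext l
    simp only [mem_filter, mem_univ, true_and, mem_singleton]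
    unfold II
    constructor
    · rintro ⟨h1, h2⟩
      apply Subtype.ext
      exact (Submodule.eq_of_le_of_finrank_eq (sup_le h1 h2) ((sup_two hxy').trans l.2.2.symm)).symm
    · rintro rfl; exact ⟨le_sup_left, le_sup_right⟩

noncomputable def BB (π : Submodule F (Fin n → F)) (V : Set (ProjPoint F n)) : Finset (PP π) :=
  univ.filter fun x => x.1 ∈ V

theorem BB_card (π : Submodule F (Fin n → F)) (V : Set (ProjPoint F n)) :
    (BB π V).card = secant F n V π := by
  rw [← pp_card π π le_rfl, BB]; congr 1; ext x; simp [x.2]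

theorem BB_tc (π : Submodule F (Fin n → F)) (V : Set (ProjPoint F n)) (l : LL π) :
    PLn.tc (II π) (BB π V) l = secant F n V l.1 := by
  rw [← pp_card π l.1 l.2.1, PLn.tc, BB, filter_filter]; rfl

/-- the code of the plane -/
noncomputable def hv (p : ℕ) (π : Submodule F (Fin n → F)) (φ : Dual F (Fin n → F)) : PP π → ZMod p :=
  fun x => if x.1.1 ≤ LinearMap.ker φ then 1 else 0

noncomputable def CC (p : ℕ) (π : Submodule F (Fin n → F)) : Submodule (ZMod p) (PP π → ZMod p) :=
  Submodule.span (ZMod p) (Set.range (hv p π))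

theorem CC_res (p : ℕ) (hn : 1 ≤ n) (π : Submodule F (Fin n → F)) (c : ProjPoint F n → ZMod p) (hc : c ∈ hypCode F p n) :
    (fun x : PP π => c x.1) ∈ CC p π := by
  refine Submodule.span_induction (p := fun c _ => (fun x : PP π => c x.1) ∈ CC p π) ?_ ?_ ?_ ?_ hc
  · rintro _ ⟨H, hH, rfl⟩
    have hlt : H < ⊤ := by
      rw [lt_top_iff_ne_top]; rintro rfl; rw [finrank_top, finrank_fin_fun] at hH; omega
    obtain ⟨φ, hφ, hle⟩ := Submodule.exists_le_ker_of_lt_top H hlt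
    have : H = LinearMap.ker φ := by
      apply Submodule.eq_of_le_of_finrank_le hle
      have h1 := LinearMap.finrank_range_add_finrank_ker φ
      have h2 : 0 < finrank F (LinearMap.range φ) := by
        rw [finrank_pos_iff, Submodule.nontrivial_iff_ne_bot]
        exact fun h => hφ (LinearMap.range_eq_bot.1 h)
      rw [finrank_fin_fun] at h1
      omega
    apply Submodule.subset_span
    refine ⟨φ, ?_⟩
    ext x
    simp only [hv, charVec, pointsIn, Set.indicator, Set.mem_ofPred_eq, this, Pi.one_apply]
  · exact Submodule.zero_mem _
  · intro x y _ _ hx hy; exact Submodule.add_mem _ hx hy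
  · intro a x _ hx; exact Submodule.smul_mem _ a hx

theorem CC_line (p : ℕ) (π : Submodule F (Fin n → F)) (hπ : finrank F π = 3) (l : LL π) :
    PLn.lind (II π) p l ∈ CC p π := by
  obtain ⟨v, hv1, hv2⟩ : ∃ v ∈ π, v ∉ l.1 := by
    apply SetLike.exists_of_lt
    apply lt_of_le_of_ne l.2.1
    intro h; have := l.2.2; rw [h] at this; omega
  obtain ⟨φ, hφ, hle⟩ := Submodule.exists_le_ker_of_notMem hv2
  apply Submodule.subset_span
  refine ⟨φ, ?_⟩
  have : π ⊓ LinearMap.ker φ = l.1 := by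
    symm
    apply Submodule.eq_of_le_of_finrank_le (le_inf l.2.1 hle)
    rw [l.2.2]
    have : finrank F (π ⊓ LinearMap.ker φ : Submodule F (Fin n → F)) < finrank F π := by
      apply Submodule.finrank_lt_finrank_of_lt
      apply lt_of_le_of_ne inf_le_left
      intro h; rw [inf_eq_left] at h; exact hφ (h hv1)
    omega
  ext x
  have e : (x.1.1 ≤ LinearMap.ker φ) ↔ II π x l := by
    rw [II, ← this, le_inf_iff]; exact ⟨fun h => ⟨x.2, h⟩, fun h => h.2⟩
  simp only [hv, PLn.lind, e]
end QH

namespace QH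
open scoped Classical
open Finset Polynomial
variable {F : Type} [Field F] [Fintype F] {n : ℕ}

theorem mu_hyp (al be ga : F) (i : ℕ) : ∃ m : F[X], m.natDegree ≤ i ∧
    ∀ y, m.eval y = ∑ x : F, x ^ i * (if x * al + be + y * ga = 0 then 1 else 0) := by
  by_cases h : al = 0
  · subst h
    by_cases hi : i < Fintype.card F - 1
    · refine ⟨0, by simp, fun y => ?_⟩
      simp only [mul_zero, zero_add]
      rw [← sum_mul, FiniteField.sum_pow_lt_card_sub_one F i hi]; simp
    · refine ⟨C (∑ x : F, x ^ i) * (1 - (C be + C ga * X) ^ (Fintype.card F - 1)), ?_, fun y => ?_⟩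
      · refine (natDegree_C_mul_le _ _).trans ?_
        refine (natDegree_sub_le _ _).trans ?_
        rw [natDegree_one, Nat.zero_max]
        refine natDegree_pow_le.trans ?_
        have : (C be + C ga * X : F[X]).natDegree ≤ 1 := by
          rw [add_comm]; exact natDegree_linear_le
        calc _ ≤ (Fintype.card F - 1) * 1 := Nat.mul_le_mul_left _ this
          _ ≤ i := by omega
      · simp only [mul_zero, zero_add, ← sum_mul, eval_mul, eval_C, eval_sub, eval_one, eval_pow, eval_add, eval_X]
        congr 1
        have hq : Fintype.card F - 1 ≠ 0 := by have := Fintype.one_lt_card (α := F); omega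
        by_cases e : be + y * ga = 0
        · rw [if_pos e, mul_comm ga, e, zero_pow hq]; simp
        · rw [if_neg e, mul_comm ga, FiniteField.pow_card_sub_one_eq_one _ e]; simp
  · refine ⟨(C (-be/al) + C (-ga/al) * X) ^ i, ?_, fun y => ?_⟩
    · refine natDegree_pow_le.trans ?_
      have : (C (-be/al) + C (-ga/al) * X : F[X]).natDegree ≤ 1 := by
        rw [add_comm]; exact natDegree_linear_le
      calc _ ≤ i * 1 := Nat.mul_le_mul_left _ this
        _ ≤ i := by omega
    · have : ∀ x : F, (x * al + be + y * ga = 0) ↔ x = -be/al + -ga/al * y := by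
        intro x
        field_simp
        constructor <;> intro h <;> linear_combination h
      simp [this]

theorem SW (p : ℕ) [Fact p.Prime] [CharP F p] (π : Submodule F (Fin n → F)) 
    (hπ : finrank F π = 3) (g : PP π → ZMod p) (hg : g ∈ CC p π) (l : LL π) :
    PLn.tc (II π) (PLn.spt g) l * (Fintype.card F + 1 - PLn.tc (II π) (PLn.spt g) l) ≤ (PLn.spt g).card := by
  by_cases hO : ∃ O : PP π, II π O l ∧ g O = 0
  swap
  · push Not at hO
    have : PLn.tc (II π) (PLn.spt g) l = Fintype.card F + 1 := by
      rw [← (plane π hπ).line l, PLn.tc, PLn.spt]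
      congr 1; ext x
      simp only [mem_filter, mem_univ, true_and]
      exact ⟨fun h => h.2, fun h => ⟨hO x h, h⟩⟩
    rw [this]; simp
  obtain ⟨O, hOl, hgO⟩ := hO
  obtain ⟨o, ho0, ho⟩ := finrank_eq_one_iff'.1 O.1.2
  obtain ⟨u, hu1, hu2⟩ : ∃ u ∈ l.1, u ∉ O.1.1 := by
    apply SetLike.exists_of_lt
    apply lt_of_le_of_ne hOl
    intro h; have h1 := l.2.2; have h2 := O.1.2; rw [← h] at h1; omega
  obtain ⟨v, hv1, hv2⟩ : ∃ v ∈ π, v ∉ l.1 := by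
    apply SetLike.exists_of_lt
    apply lt_of_le_of_ne l.2.1
    intro h; have := l.2.2; rw [h] at this; omega
  obtain ⟨o, hoO⟩ := o
  have ho0 : o ≠ 0 := fun h => ho0 (Subtype.ext h)
  have ho : ∀ w ∈ O.1.1, ∃ c : F, c • o = w := fun w hw => by
    obtain ⟨c, hc⟩ := ho ⟨w, hw⟩; exact ⟨c, congrArg Subtype.val hc⟩
  have hol : o ∈ l.1 := hOl hoO
  have ind : ∀ a b c : F, a • o + b • u + c • v = 0 → a = 0 ∧ b = 0 ∧ c = 0 := by
    intro a b c h
    have hc : c = 0 := by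
      by_contra hc
      apply hv2
      have : v = c⁻¹ • (-(a • o + b • u)) := by
        rw [← eq_neg_of_add_eq_zero_right h, smul_smul, inv_mul_cancel₀ hc, one_smul]
      rw [this]
      exact Submodule.smul_mem _ _ (Submodule.neg_mem _ (Submodule.add_mem _ (Submodule.smul_mem _ _ hol) (Submodule.smul_mem _ _ hu1)))
    subst hc
    rw [zero_smul, add_zero] at h
    have hb : b = 0 := by
      by_contra hb
      apply hu2
      have : u = b⁻¹ • (-(a • o)) := by
        rw [← eq_neg_of_add_eq_zero_right h, smul_smul, inv_mul_cancel₀ hb, one_smul]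
      rw [this]
      exact Submodule.smul_mem _ _ (Submodule.neg_mem _ (Submodule.smul_mem _ _ hoO))
    subst hb
    rw [zero_smul, add_zero] at h
    exact ⟨(smul_eq_zero.1 h).resolve_right ho0, rfl, rfl⟩
  have hw0 : ∀ x y : F, x • o + u + y • v ≠ 0 := by
    intro x y h
    have := ind x 1 y (by rw [one_smul]; exact h)
    exact one_ne_zero this.2.1
  have hwπ : ∀ x y : F, x • o + u + y • v ∈ π := fun x y =>
    Submodule.add_mem _ (Submodule.add_mem _ (Submodule.smul_mem _ _ (l.2.1 hol)) (l.2.1 hu1)) (Submodule.smul_mem _ _ hv1)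
  let pt : F → F → PP π := fun x y => ⟨⟨Submodule.span F {x • o + u + y • v}, finrank_span_singleton (hw0 x y)⟩,
    (Submodule.span_singleton_le_iff_mem _ _).2 (hwπ x y)⟩
  have ptle : ∀ x y (W : Submodule F (Fin n → F)), (pt x y).1.1 ≤ W ↔ x • o + u + y • v ∈ W :=
    fun x y W => Submodule.span_singleton_le_iff_mem _ _
  have ptinj : ∀ x y x' y', pt x y = pt x' y' → x = x' ∧ y = y' := by
    intro x y x' y' h
    have h1 : (pt x y).1.1 ≤ (pt x' y').1.1 := by rw [h]
    rw [ptle] at h1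
    obtain ⟨c, hc⟩ := Submodule.mem_span_singleton.1 h1
    have := ind (c * x' - x) (c - 1) (c * y' - y) (by
      have h3 : (c * x' - x) • o + (c - 1) • u + (c * y' - y) • v =
        c • (x' • o + u + y' • v) - (x • o + u + y • v) := by module
      rw [h3, hc, sub_self])
    obtain ⟨h1, h2, h3⟩ := this
    have hc1 : c = 1 := by linear_combination h2
    subst hc1
    exact ⟨by linear_combination -h1, by linear_combination -h3⟩
  let κ : ZMod p →+* F := ZMod.castHom (dvd_refl p) F
  have hmu : ∀ i, ∃ m : F[X], m.natDegree ≤ i ∧ ∀ y, m.eval y = ∑ x : F, x ^ i * κ (g (pt x y)) := by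
    intro i
    refine Submodule.span_induction (p := fun g _ => ∃ m : F[X], m.natDegree ≤ i ∧ ∀ y, m.eval y = ∑ x : F, x ^ i * κ (g (pt x y))) ?_ ?_ ?_ ?_ hg
    · rintro _ ⟨ψ, rfl⟩
      obtain ⟨m, h1, h2⟩ := mu_hyp (ψ o) (ψ u) (ψ v) i
      refine ⟨m, h1, fun y => ?_⟩
      rw [h2]
      refine sum_congr rfl fun x _ => ?_
      have : ((pt x y).1.1 ≤ LinearMap.ker ψ) ↔ x * ψ o + ψ u + y * ψ v = 0 := by
        rw [ptle, LinearMap.mem_ker]; simp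
      simp only [hv, this]
      split_ifs <;> simp
    · exact ⟨0, by simp, by simp⟩
    · rintro a b _ _ ⟨m, h1, h2⟩ ⟨m', h1', h2'⟩
      refine ⟨m + m', (natDegree_add_le _ _).trans (max_le h1 h1'), fun y => ?_⟩
      rw [eval_add, h2, h2', ← sum_add_distrib]
      refine sum_congr rfl fun x _ => ?_
      rw [Pi.add_apply, map_add, mul_add]
    · rintro a b _ ⟨m, h1, h2⟩
      refine ⟨C (κ a) * m, (natDegree_C_mul_le _ _).trans h1, fun y => ?_⟩
      rw [eval_mul, eval_C, h2, mul_sum]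
      refine sum_congr rfl fun x _ => ?_
      rw [Pi.smul_apply, smul_eq_mul, map_mul]; ring
  choose mu hd hm using hmu
  have hκ : ∀ z : ZMod p, κ z ≠ 0 ↔ z ≠ 0 := fun z => map_ne_zero κ
  have hs : (univ.filter fun x => κ (g (pt x 0)) ≠ 0).card = PLn.tc (II π) (PLn.spt g) l := by
    rw [PLn.tc, PLn.spt]
    apply card_bij (fun x _ => pt x 0)
    · intro x hx
      simp only [mem_filter, mem_univ, true_and, hκ] at hx ⊢
      refine ⟨hx, ?_⟩
      show (pt x 0).1.1 ≤ l.1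
      rw [ptle, zero_smul, add_zero]
      exact Submodule.add_mem _ (Submodule.smul_mem _ _ hol) hu1
    · intro x _ y _ h; exact (ptinj _ _ _ _ h).1
    · intro R hR
      simp only [mem_filter, mem_univ, true_and, hκ] at hR ⊢
      obtain ⟨hR1, hR2⟩ := hR
      suffices h : ∃ x, pt x 0 = R by
        obtain ⟨x, hx⟩ := h; exact ⟨x, by rw [hx]; exact hR1, hx⟩
      have hRO : R ≠ O := by rintro rfl; exact hR1 hgO
      obtain ⟨w, hw0', hw'⟩ := finrank_eq_one_iff'.1 R.1.2
      obtain ⟨w, hwR⟩ := w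
      have hw0 : w ≠ 0 := fun h => hw0' (Subtype.ext h)
      have hl : Submodule.span F {o, u} = l.1 := by
        apply Submodule.eq_of_le_of_finrank_le
        · rw [Submodule.span_le]; rintro z (rfl | rfl); exacts [hol, hu1]
        · rw [l.2.2]
          have : LinearIndependent F ![o, u] := by
            rw [LinearIndependent.pair_iff]
            intro s t h
            have := ind s t 0 (by rw [h]; simp)
            exact ⟨this.1, this.2.1⟩
          have := finrank_span_eq_card this
          have hr : Set.range ![o, u] = {o, u} := by simp [Matrix.range_cons, Set.pair_comm]
          rw [hr, Fintype.card_fin] at this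
          exact this.ge
      have hwl : w ∈ Submodule.span F {o, u} := by rw [hl]; exact hR2 hwR
      obtain ⟨a, b, hab⟩ := Submodule.mem_span_pair.1 hwl
      have hb : b ≠ 0 := by
        rintro rfl
        rw [zero_smul, add_zero] at hab
        apply hRO
        apply Subtype.ext
        apply pt_eq_of_le
        intro z hz
        obtain ⟨c, hc⟩ := hw' ⟨z, hz⟩
        have hc : c • w = z := congrArg Subtype.val hc
        rw [← hc, ← hab]
        exact Submodule.smul_mem _ _ (Submodule.smul_mem _ _ hoO)
      refine ⟨b⁻¹ * a, ?_⟩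
      apply Subtype.ext
      apply pt_eq_of_le
      rw [ptle]
      have : (b⁻¹ * a) • o + u + (0 : F) • v = b⁻¹ • w := by
        rw [← hab, smul_add, smul_smul, smul_smul, inv_mul_cancel₀ hb]; simp
      rw [this]
      exact Submodule.smul_mem _ _ hwR
  have main := hk_main (fun x y => κ (g (pt x y))) mu hd hm 0 _ hs
  have hle : ∑ y : F, (univ.filter fun x => κ (g (pt x y)) ≠ 0).card ≤ (PLn.spt g).card := by
    have : ∑ y : F, (univ.filter fun x => κ (g (pt x y)) ≠ 0).card =
        (univ.filter fun z : F × F => κ (g (pt z.2 z.1)) ≠ 0).card := by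
      simp only [card_filter]
      rw [Fintype.sum_prod_type]
    rw [this]
    apply card_le_card_of_injOn (fun z => pt z.2 z.1)
    · intro z hz
      simp only [PLn.spt, coe_filter, mem_univ, true_and, hκ, Set.mem_ofPred_eq] at hz ⊢
      exact hz
    · intro z _ z' _ h
      obtain ⟨h1, h2⟩ := ptinj _ _ _ _ h
      exact Prod.ext h2 h1
  have hsQ : PLn.tc (II π) (PLn.spt g) l ≤ Fintype.card F := by
    rw [← hs]; exact card_le_univ _
  generalize PLn.tc (II π) (PLn.spt g) l = s at *
  generalize (PLn.spt g).card = m at *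
  rcases Nat.eq_zero_or_pos s with h0 | h0
  · subst h0; simp
  have main := main.trans (Nat.add_le_add_right hle _)
  zify [h0, show s ≤ Fintype.card F + 1 by omega] at main ⊢
  nlinarith
end QH

namespace QH
open scoped Classical
open Finset
variable {F : Type} [Field F] [Fintype F] {n : ℕ}
noncomputable instance : Fintype (Submodule F (Fin n → F)) := Fintype.ofFinite _

theorem sup_three {x : ProjPoint F n} {l : Submodule F (Fin n → F)} (hl : finrank F l = 2) (h : ¬ x.1 ≤ l) :
    finrank F (x.1 ⊔ l : Submodule F (Fin n → F)) = 3 := by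
  have h1 := Submodule.finrank_sup_add_finrank_inf_eq x.1 l
  rw [x.2, hl] at h1
  have : finrank F (x.1 ⊓ l : Submodule F (Fin n → F)) = 0 := by
    by_contra h0
    have h2 : (x.1 ⊓ l : Submodule F (Fin n → F)) = x.1 := by
      apply Submodule.eq_of_le_of_finrank_le inf_le_left
      rw [x.2]; omega
    exact h (inf_eq_left.1 h2)
  omega

theorem split_card (V : Set (ProjPoint F n)) (l W : Submodule F (Fin n → F)) (h : l ≤ W) :
    secant F n V W = (univ.filter fun P : ProjPoint F n => P ∈ V ∧ ¬ P.1 ≤ l ∧ P.1 ≤ W).card + secant F n V l := by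
  rw [secant_eq, secant_eq, ← card_filter_add_card_filter_not (fun P : ProjPoint F n => ¬ P.1 ≤ l)]
  rw [filter_filter, filter_filter]
  congr 2
  · ext P; simp only [mem_filter, mem_univ, true_and]; tauto
  · ext P; simp only [mem_filter, mem_univ, true_and, not_not]
    exact ⟨fun h => ⟨h.1.1, h.2⟩, fun h' => ⟨⟨h'.1, h'.2.trans h⟩, h'.2⟩⟩

theorem off_sum (V : Set (ProjPoint F n)) (l : Submodule F (Fin n → F)) (hl : finrank F l = 2) :
    (univ.filter fun P : ProjPoint F n => P ∈ V ∧ ¬ P.1 ≤ l).card =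
    ∑ W ∈ univ.filter (fun W : Submodule F (Fin n → F) => l ≤ W ∧ finrank F W = 3),
      (univ.filter fun P : ProjPoint F n => P ∈ V ∧ ¬ P.1 ≤ l ∧ P.1 ≤ W).card := by
  rw [card_eq_sum_card_fiberwise (f := fun P : ProjPoint F n => P.1 ⊔ l)
    (t := univ.filter (fun W : Submodule F (Fin n → F) => l ≤ W ∧ finrank F W = 3))]
  · refine sum_congr rfl fun W hW => ?_
    simp only [mem_filter, mem_univ, true_and] at hW
    rw [filter_filter]
    congr 1; ext P; simp only [mem_filter, mem_univ, true_and]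
    constructor
    · rintro ⟨⟨h1, h2⟩, rfl⟩; exact ⟨h1, h2, le_sup_left⟩
    · rintro ⟨h1, h2, h3⟩
      exact ⟨⟨h1, h2⟩, Submodule.eq_of_le_of_finrank_eq (sup_le h3 hW.1) ((sup_three hl h2).trans hW.2.symm)⟩
  · intro P hP
    simp only [coe_filter, mem_univ, true_and, Set.mem_ofPred_eq] at hP ⊢
    exact ⟨le_sup_right, sup_three hl hP.2⟩

theorem avg_arith (q X v S e : ℤ) (hq : 2 ≤ q) (hX : q ^ 4 ≤ X) (he : e = 1 ∨ e = -1)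
    (hv : v * (q ^ 2 - 1) = (q * X + e) * (X - e)) (hS : S * (q ^ 2 - 1) = q ^ 2 * X ^ 2 - q ^ 4)
    (h : (q ^ 3 + 1) * S ≤ q ^ 4 * v) : False := by
  have h1 : 0 ≤ q ^ 2 - 1 := by nlinarith
  have h2 := mul_le_mul_of_nonneg_right h h1
  rw [mul_assoc, mul_assoc, hv, hS] at h2
  have hq3 : 0 ≤ q ^ 3 := by positivity
  have a1 : q ^ 4 * (q * X) ≤ X * (q * X) := mul_le_mul_of_nonneg_right hX (by nlinarith [pow_pos (by omega : 0 < q) 4])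
  have hXp : 0 < X := lt_of_lt_of_le (by positivity) hX
  have hq0 : 0 < q := by omega
  -- q^2 X^2 >= q^6 X >= 2 q^5 X
  have a2 : q ^ 2 * (q ^ 4 * X) ≤ q ^ 2 * (X * X) := by gcongr
  have a3 : 2 * (q ^ 5 * X) ≤ q ^ 2 * (q ^ 4 * X) := by
    have : 0 ≤ (q - 2) * (q ^ 5 * X) := mul_nonneg (by omega) (by positivity)
    nlinarith
  have a4 : q ^ 5 * q ^ 4 ≤ q ^ 5 * X := by gcongr
  have a5 : q ^ 7 ≤ q ^ 9 := pow_le_pow_right₀ (by omega) (by norm_num)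
  have a6 : 0 < q ^ 4 * X := by positivity
  have a7 : 0 < q ^ 5 * X := by positivity
  rcases he with rfl | rfl <;> nlinarith

theorem avg (q r : ℕ) (hr : 4 ≤ r) (hq : 2 ≤ q) (hF : Fintype.card F = q ^ 2)
    (V : Set (ProjPoint F (r + 1))) (hV : IsQuasiHermitian F q r V)
    (l : Submodule F (Fin (r + 1) → F)) (hl : finrank F l = 2) :
    ∃ W : Submodule F (Fin (r + 1) → F), l ≤ W ∧ finrank F W = 3 ∧
      secant F (r + 1) V W ≤ q ^ 3 + secant F (r + 1) V l := by
  by_contra! hc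
  have h1 := off_sum V l hl
  obtain ⟨U, hU⟩ : ∃ U : Set (ProjPoint F (r + 1)), U = Set.univ := ⟨_, rfl⟩
  have sU : ∀ W, secant F (r + 1) U W = (pointsIn F (r + 1) W).ncard := by
    intro W; rw [hU, sec_univ]
  have h2 := off_sum U l hl
  set T := univ.filter (fun W : Submodule F (Fin (r + 1) → F) => l ≤ W ∧ finrank F W = 3) with hT
  have h3 : T.card * (q ^ 3 + 1) ≤ (univ.filter fun P : ProjPoint F (r+1) => P ∈ V ∧ ¬ P.1 ≤ l).card := by
    rw [h1, ← smul_eq_mul]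
    apply card_nsmul_le_sum
    intro W hW
    simp only [hT, mem_filter, mem_univ, true_and] at hW
    have := hc W hW.1 hW.2
    rw [split_card V l W hW.1] at this
    omega
  have h4 : (univ.filter fun P : ProjPoint F (r+1) => P ∈ U ∧ ¬ P.1 ≤ l).card = T.card * q ^ 4 := by
    rw [h2, ← smul_eq_mul]
    apply sum_eq_card_nsmul
    intro W hW
    simp only [hT, mem_filter, mem_univ, true_and] at hW
    have := split_card U l W hW.1
    rw [sU, sU, pts_three W hW.2, pts_two l hl, hF] at this
    rw [show q ^ 4 = (q ^ 2) ^ 2 by ring]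
    omega
  have h5 : (univ.filter fun P : ProjPoint F (r+1) => P ∈ V ∧ ¬ P.1 ≤ l).card ≤ V.ncard := by
    rw [ncard_eq]; apply card_le_card; intro P; simp only [mem_filter, mem_univ, true_and]; exact fun h => h.1
  have h6 := split_card U l ⊤ le_top
  simp only [le_top, and_true] at h6
  rw [h4, sU, sU, pts_two l hl, hF] at h6
  have h7 := pts_card (⊤ : Submodule F (Fin (r + 1) → F))
  rw [h6, finrank_top, finrank_fin_fun, hF] at h7
  have hq2 : 1 ≤ q ^ 2 := Nat.one_le_pow _ _ (by omega)
  zify [hq2] at h7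
  have hv := hV.1
  refine avg_arith q (q ^ r) V.ncard (T.card * q ^ 4) ((-1) ^ r) (by exact_mod_cast hq)
    (pow_le_pow_right₀ (by exact_mod_cast (by omega : 1 ≤ q)) hr) (neg_one_pow_eq_or ℤ r) ?_ ?_ ?_
  · rw [hv]; ring
  · have e : ((q : ℤ) ^ 2) ^ (r + 1) = q ^ 2 * (q ^ r) ^ 2 := by ring
    rw [e] at h7; linear_combination h7
  · have := h3.trans h5
    zify at this
    have h8 : (0 : ℤ) ≤ q ^ 4 := by positivity
    nlinarith [mul_le_mul_of_nonneg_left this h8]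
end QH

namespace QH
open scoped Classical
open Finset
variable {F : Type} [Field F] [Fintype F] {n : ℕ}

theorem st1 (p s e : ℕ) (hp : 5 ≤ p) (hs : s % p = 1) (he : s + e = p ^ 4 + 1)
    (h : s * e ≤ p ^ 6 + s) : s ≤ p ^ 2 + 1 ∨ e ≤ p ^ 2 := by
  by_contra! hc
  obtain ⟨h1, h2⟩ := hc
  obtain ⟨k, hk⟩ : ∃ k, s = p * k + 1 := ⟨s / p, by rw [← hs]; exact (Nat.div_add_mod s p).symm⟩
  have e2 : p ^ 2 = p * p := by ring
  have e4 : p ^ 4 = p * p ^ 3 := by ring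
  have hk1 : p + 1 ≤ k := by
    have : p * p < p * k := by omega
    exact Nat.lt_of_mul_lt_mul_left this
  have hk2 : p + 1 + k ≤ p ^ 3 := by
    have : p * (p + k) < p * p ^ 3 := by rw [mul_add]; omega
    have := Nat.lt_of_mul_lt_mul_left this
    omega
  have hs1 : p ^ 2 + p + 1 ≤ s := by rw [hk]; nlinarith
  have he1 : p ^ 2 + p ≤ e := by
    have : p * (p + 1 + k) ≤ p * p ^ 3 := Nat.mul_le_mul_left _ hk2
    have e3 : p * (p + 1 + k) = p * p + p + p * k := by ring
    omega
  zify at *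
  have hpos := mul_nonneg (sub_nonneg.2 hs1) (sub_nonneg.2 he1)
  have hee : (e : ℤ) = p ^ 4 + 1 - s := by linarith
  rw [hee] at hpos h he1
  have q2 : (25 : ℤ) ≤ p ^ 2 := by nlinarith
  have q3 : (5 : ℤ) * p ^ 2 ≤ p ^ 3 := by nlinarith
  have q4 : (5 : ℤ) * p ^ 3 ≤ p ^ 4 := by nlinarith [pow_nonneg (by omega : (0:ℤ) ≤ p) 3]
  have q5 : (5 : ℤ) * p ^ 4 ≤ p ^ 5 := by nlinarith [pow_nonneg (by omega : (0:ℤ) ≤ p) 4]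
  nlinarith

theorem fin_arith (p m : ℤ) (hp : 5 ≤ p)
    (h : 0 ≤ m * (m + p ^ 4) - ((p ^ 2 + 1) + (p ^ 4 + 1 - p)) * (m * (p ^ 4 + 1))
      + (p ^ 2 + 1) * (p ^ 4 + 1 - p) * ((p ^ 4) ^ 2 + p ^ 4 + 1))
    (h1 : p ^ 6 + 2 * p ^ 4 - p ^ 2 - p + 1 < m) (h2 : m < p ^ 8 - p ^ 5 + p ^ 4 - p + 1) : False := by
  have a : 0 ≤ (m - (p ^ 6 + 2 * p ^ 4 - p ^ 2 - p + 2)) * ((p ^ 8 - p ^ 5 + p ^ 4 - p) - m) :=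
    mul_nonneg (by omega) (by omega)
  have k : 0 ≤ p ^ 4 - 2 * p ^ 2 - p := by
    obtain ⟨x, rfl⟩ : ∃ x, p = x + 5 := ⟨p - 5, by ring⟩
    have : 0 ≤ x := by omega
    ring_nf; positivity
  have b := mul_nonneg k (by omega : 0 ≤ (p ^ 8 - p ^ 5 + p ^ 4 - p) - m)
  set M := p ^ 8 - p ^ 5 + p ^ 4 - p with hM
  have c : M * (M + p ^ 4) - ((p ^ 2 + 1) + (p ^ 4 + 1 - p)) * (M * (p ^ 4 + 1))
      + (p ^ 2 + 1) * (p ^ 4 + 1 - p) * ((p ^ 4) ^ 2 + p ^ 4 + 1) < 0 := by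
    rw [← neg_pos, hM]
    obtain ⟨x, rfl⟩ : ∃ x, p = x + 5 := ⟨p - 5, by ring⟩
    have : 0 ≤ x := by omega
    ring_nf; positivity
  have d : m * (m + p ^ 4) - ((p ^ 2 + 1) + (p ^ 4 + 1 - p)) * (m * (p ^ 4 + 1))
      + (p ^ 2 + 1) * (p ^ 4 + 1 - p) * ((p ^ 4) ^ 2 + p ^ 4 + 1)
    = (M * (M + p ^ 4) - ((p ^ 2 + 1) + (p ^ 4 + 1 - p)) * (M * (p ^ 4 + 1))
      + (p ^ 2 + 1) * (p ^ 4 + 1 - p) * ((p ^ 4) ^ 2 + p ^ 4 + 1))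
     - (m - (p ^ 6 + 2 * p ^ 4 - p ^ 2 - p + 2)) * (M - m) - (p ^ 4 - 2 * p ^ 2 - p) * (M - m) := by
    rw [hM]; ring
  linarith

theorem main (p r : ℕ) (hp : p.Prime) (hp3 : 3 < p) (hr : 4 ≤ r)
    (F : Type) [Field F] [Fintype F] (hF : Fintype.card F = p ^ 4)
    (V : Set (ProjPoint F (r + 1))) (hV : IsQuasiHermitian F (p ^ 2) r V)
    (hcode : charVec F p (r + 1) V ∈ hypCode F p (r + 1)) :
    ∀ π : Submodule F (Fin (r + 1) → F), finrank F π = 3 →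
      secant F (r + 1) V π ≤ p ^ 6 + 2 * p ^ 4 - p ^ 2 - p + 1 ∨
      p ^ 8 - p ^ 5 + p ^ 4 - p + 1 ≤ secant F (r + 1) V π := by
  have hp5 : 5 ≤ p := by
    rcases Nat.lt_or_ge p 5 with h | h
    · have : p = 4 := by omega
      subst this; revert hp; norm_num
    · exact h
  have : Fact p.Prime := ⟨hp⟩
  have : CharP F p := charP_of_card_eq_prime_pow hF
  have hpF : p ∣ Fintype.card F := by rw [hF]; exact dvd_pow_self p (by norm_num)
  have hmod : ∀ l : Submodule F (Fin (r + 1) → F), finrank F l = 2 → secant F (r + 1) V l % p = 1 := by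
    intro l hl
    have h := secant_mod p hpF V hcode (V_mod p r (by omega) hp V hV) l hl.ge
    have h' : ((secant F (r + 1) V l : ℕ) : ZMod p) = ((1 : ℕ) : ZMod p) := by rw [h]; simp
    rw [ZMod.natCast_eq_natCast_iff'] at h'
    rw [h', Nat.mod_eq_of_lt (by omega)]
  have hind : ∀ W : Submodule F (Fin (r + 1) → F),
      (fun x => if x ∈ BB W V then (1 : ZMod p) else 0) ∈ CC p W := by
    intro W
    convert CC_res p (by omega) W _ hcode using 1
    ext x
    by_cases h : x.1 ∈ V <;> simp [BB, charVec, h]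
  have hspt : ∀ W : Submodule F (Fin (r + 1) → F),
      PLn.spt (fun x => if x ∈ BB W V then (1 : ZMod p) else 0) = BB W V := by
    intro W; ext x; simp [PLn.spt]
  have hle : ∀ l : Submodule F (Fin (r + 1) → F), finrank F l = 2 → secant F (r + 1) V l ≤ p ^ 4 + 1 := by
    intro l hl
    rw [← hF, ← pts_two l hl]
    exact Set.ncard_le_ncard Set.inter_subset_right (Set.toFinite _)
  have gap1 : ∀ l : Submodule F (Fin (r + 1) → F), finrank F l = 2 →
      secant F (r + 1) V l ≤ p ^ 2 + 1 ∨ p ^ 4 + 1 ≤ secant F (r + 1) V l + p ^ 2 := by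
    intro l hl
    obtain ⟨W, hlW, hW, hm⟩ := avg (p ^ 2) r hr (by nlinarith) (by rw [hF]; ring) V hV l hl
    have h := SW p W hW _ (hind W) ⟨l, hlW, hl⟩
    rw [hspt, BB_tc, BB_card, hF] at h
    have := st1 p (secant F (r + 1) V l) (p ^ 4 + 1 - secant F (r + 1) V l) hp5 (hmod l hl)
      (by have := hle l hl; omega) (h.trans (hm.trans (by apply le_of_eq; ring)))
    have := hle l hl
    omega
  have gap2 : ∀ l : Submodule F (Fin (r + 1) → F), finrank F l = 2 →
      secant F (r + 1) V l ≤ p ^ 2 + 1 ∨ p ^ 4 + 1 ≤ secant F (r + 1) V l + p := by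
    intro l hl
    by_contra! hc
    obtain ⟨hc1, hc2⟩ := hc
    have hg := (gap1 l hl).resolve_left (by omega)
    obtain ⟨W, hlW, hW, hm⟩ := avg (p ^ 2) r hr (by nlinarith) (by rw [hF]; ring) V hV l hl
    have hl1 := hle l hl
    obtain ⟨e, he⟩ : ∃ e, secant F (r + 1) V l + e = p ^ 4 + 1 := ⟨p ^ 4 + 1 - secant F (r + 1) V l, by omega⟩
    have hde : p ∣ e := by
      have h1 : p ∣ secant F (r + 1) V l - 1 := by
        have := Nat.dvd_sub_mod (n := p) (secant F (r + 1) V l)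
        rwa [hmod l hl] at this
      have h2 : p ∣ p ^ 4 := dvd_pow_self p (by norm_num)
      have h3 : p ^ 4 = (secant F (r + 1) V l - 1) + e := by omega
      rw [h3] at h2
      exact (Nat.dvd_add_right h1).1 h2
    have he2 : 2 * p ≤ e := by
      obtain ⟨k, rfl⟩ := hde
      have : 1 < k := by
        by_contra hk
        have : p * k ≤ p * 1 := Nat.mul_le_mul_left _ (by omega)
        omega
      nlinarith
    refine PLn.lem3 (plane W hW) hp5 (q := p ^ 2) rfl (by rw [hF]; ring) (CC p W) (CC_line p W hW)
      (fun g hg l => SW p W hW g hg l) (BB W V) (by convert hind W) ?_ ?_ ⟨l, hlW, hl⟩ e ?_ he2 (by omega) ?_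
    · intro l'; rw [BB_tc]; exact hmod _ l'.2.2
    · intro l'; rw [BB_tc, hF]; exact gap1 _ l'.2.2
    · rw [BB_tc, hF]; exact he
    · rw [BB_tc, BB_card]; exact hm
  intro π hπ
  have hquad := PLn.quad (plane π hπ) (BB π V) ((p : ℤ) ^ 2 + 1) ((p : ℤ) ^ 4 + 1 - p)
    (by
      have hz : (5 : ℤ) ≤ p := by exact_mod_cast hp5
      have q2 : (25 : ℤ) ≤ (p : ℤ) ^ 2 := by nlinarith
      nlinarith)
    (by
      intro l; rw [BB_tc]
      rcases gap2 l.1 l.2.2 with h | h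
      · left; exact_mod_cast h
      · right; zify at h; linarith)
  rw [BB_card, hF] at hquad
  push_cast at hquad
  by_contra! hc
  obtain ⟨h1, h2⟩ := hc
  have b1 : p ^ 2 + p ≤ 2 * p ^ 4 := by
    have : p ^ 2 ≤ p ^ 4 := Nat.pow_le_pow_right (by omega) (by norm_num)
    have : p ≤ p ^ 4 := Nat.le_self_pow (by norm_num) p
    omega
  have b2 : p ^ 5 ≤ p ^ 8 := Nat.pow_le_pow_right (by omega) (by norm_num)
  have b3 : p ≤ p ^ 4 := Nat.le_self_pow (by norm_num) p
  refine fin_arith p (secant F (r + 1) V π) (by exact_mod_cast hp5) hquad ?_ ?_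
  · have : p ^ 6 + 2 * p ^ 4 + 1 < secant F (r + 1) V π + p ^ 2 + p := by omega
    zify at this; linarith
  · have : secant F (r + 1) V π + p ^ 5 + p < p ^ 8 + p ^ 4 + 1 := by omega
    zify at this; linarith
end QH

/-- in PG(r, p⁴) (so `q = p²`), every plane meets `V` in at most
`p⁶ + 2p⁴ - p² - p + 1` or at least `p⁸ - p⁵ + p⁴ - p + 1` points. -/
theorem stmt16 (p r : ℕ) (hp : p.Prime) (hp3 : 3 < p) (hr : 4 ≤ r)
    (F : Type) [Field F] [Fintype F] (hF : Fintype.card F = p ^ 4)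
    (V : Set (ProjPoint F (r + 1))) (hV : IsQuasiHermitian F (p ^ 2) r V)
    (hcode : charVec F p (r + 1) V ∈ hypCode F p (r + 1)) :
    ∀ π : Submodule F (Fin (r + 1) → F), finrank F π = 3 →
      secant F (r + 1) V π ≤ p ^ 6 + 2 * p ^ 4 - p ^ 2 - p + 1 ∨
      p ^ 8 - p ^ 5 + p ^ 4 - p + 1 ≤ secant F (r + 1) V π := by
  exact QH.main p r hp hp3 hr F hF V hV hcode
end
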